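/- (Hind's folding bound.) For every integer k ≥ 1 and every real x ≥ 1, one has c_k(x) ≤ 3x/(x+1). -/

import Mathlib

noncomputable section

/-- The standard symplectic form `ω₀ = Σ dxⱼ ∧ dyⱼ` on `ℝ²ⁿ ≅ ℂⁿ`,
identified via `z_j = x_j + i y_j`; on tangent vectors `u v : Fin n → ℂ` it is
`Σⱼ Im(conj (u j) * v j) = Σⱼ (uⱼ.re * vⱼ.im - uⱼ.im * vⱼ.re)`. -/
def omega0 {n : ℕ} (u v : Fin n → ℂ) : ℝ :=
  ∑ j, ((starRingEnd ℂ) (u j) * v j).im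

/-- `U ↪ V`: there is a smooth injective map `f` defined on an open neighbourhood `W` of `U`
with `f(U) ⊆ V`, whose derivative preserves `ω₀`. -/
def SympEmb {n : ℕ} (U V : Set (Fin n → ℂ)) : Prop :=
  ∃ (W : Set (Fin n → ℂ)) (f : (Fin n → ℂ) → (Fin n → ℂ)),
    IsOpen W ∧ U ⊆ W ∧ ContDiffOn ℝ (⊤ : ℕ∞) f W ∧ Set.InjOn f W ∧ f '' U ⊆ V ∧
    ∀ p ∈ W, ∀ u v : Fin n → ℂ,
      omega0 (fderiv ℝ f p u) (fderiv ℝ f p v) = omega0 u v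

/-- `E(a,b) × ℝ^{2k} ⊆ ℝ^{4+2k} ≅ ℂ^{k+2}`: the set of `z` with
`π(|z₀|²/a + |z₁|²/b) ≤ 1`, with no constraint on the remaining `k` complex coordinates.
For `k = 0` this is the ellipsoid `E(a,b) ⊂ ℂ²`, and `stabEll μ μ k` is `B⁴(μ) × ℝ^{2k}`. -/
def stabEll (a b : ℝ) (k : ℕ) : Set (Fin (k + 2) → ℂ) :=
  {z | Real.pi * (‖z 0‖ ^ 2 / a + ‖z 1‖ ^ 2 / b) ≤ 1}

/-- `c_k(x) = inf {μ > 0 : E(1,x) × ℝ^{2k} ↪ B⁴(μ) × ℝ^{2k}}`. -/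
def ck (k : ℕ) (x : ℝ) : ℝ :=
  sInf {μ : ℝ | 0 < μ ∧ SympEmb (stabEll 1 x k) (stabEll μ μ k)}

end

section

open Filter Topology

section SympAt

variable {E F H : Type*} [NormedAddCommGroup E] [NormedSpace ℝ E] [NormedAddCommGroup F]
  [NormedSpace ℝ F] [NormedAddCommGroup H] [NormedSpace ℝ H]

/-- `f` is smooth at `p` and its derivative there pulls back the form `ωF` to `ωE`. -/
def SympAt (ωE : E → E → ℝ) (ωF : F → F → ℝ) (f : E → F) (p : E) : Prop :=
  ContDiffAt ℝ (⊤ : ℕ∞) f p ∧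
    ∀ u v, ωF (fderiv ℝ f p u) (fderiv ℝ f p v) = ωE u v

/-- The direct sum of two forms. -/
def prodForm (ωE : E → E → ℝ) (ωF : F → F → ℝ) (u v : E × F) : ℝ :=
  ωE u.1 v.1 + ωF u.2 v.2

/-- The standard area form on the plane. -/
def areaForm (u v : ℝ × ℝ) : ℝ := u.1 * v.2 - u.2 * v.1

variable {ωE : E → E → ℝ} {ωF : F → F → ℝ} {ωH : H → H → ℝ}

lemma SympAt.of_hasFDerivAt {f : E → F} {p : E} {f' : E →L[ℝ] F}
    (hf : ContDiffAt ℝ (⊤ : ℕ∞) f p) (h : HasFDerivAt f f' p)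
    (hω : ∀ u v, ωF (f' u) (f' v) = ωE u v) : SympAt ωE ωF f p :=
  ⟨hf, by rw [h.fderiv]; exact hω⟩

lemma SympAt.differentiableAt {f : E → F} {p : E} (hf : SympAt ωE ωF f p) :
    DifferentiableAt ℝ f p :=
  hf.1.differentiableAt (by simp)

lemma SympAt.comp {g : F → H} {f : E → F} (p : E) (hg : SympAt ωF ωH g (f p))
    (hf : SympAt ωE ωF f p) : SympAt ωE ωH (fun q => g (f q)) p := by
  refine SympAt.of_hasFDerivAt (hg.1.comp p hf.1)
    (hg.differentiableAt.hasFDerivAt.comp p hf.differentiableAt.hasFDerivAt) fun u v => ?_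
  simp [hg.2, hf.2]

lemma SympAt.congr {f g : E → F} {p : E} (hf : SympAt ωE ωF f p) (h : g =ᶠ[𝓝 p] f) :
    SympAt ωE ωF g p :=
  ⟨hf.1.congr_of_eventuallyEq h, by rw [h.fderiv_eq]; exact hf.2⟩

lemma sympAt_id (p : E) : SympAt ωE ωE (fun q => q) p :=
  SympAt.of_hasFDerivAt contDiffAt_id (hasFDerivAt_id p) fun _ _ => rfl

lemma ContinuousLinearMap.sympAt (f : E →L[ℝ] F) (h : ∀ u v, ωF (f u) (f v) = ωE u v) (p : E) :
    SympAt ωE ωF f p :=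
  SympAt.of_hasFDerivAt f.contDiff.contDiffAt f.hasFDerivAt h

lemma SympAt.prodMap {E' F' : Type*} [NormedAddCommGroup E'] [NormedSpace ℝ E']
    [NormedAddCommGroup F'] [NormedSpace ℝ F'] {ωE' : E' → E' → ℝ} {ωF' : F' → F' → ℝ}
    {f : E → F} {g : E' → F'} {p : E × E'} (hf : SympAt ωE ωF f p.1)
    (hg : SympAt ωE' ωF' g p.2) :
    SympAt (prodForm ωE ωE') (prodForm ωF ωF') (fun q => (f q.1, g q.2)) p := by
  refine SympAt.of_hasFDerivAt
    ((hf.1.comp p contDiffAt_fst).prodMk (hg.1.comp p contDiffAt_snd))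
    ((hf.differentiableAt.hasFDerivAt.comp p hasFDerivAt_fst).prodMk
      (hg.differentiableAt.hasFDerivAt.comp p hasFDerivAt_snd)) fun u v => ?_
  simp [prodForm, hf.2, hg.2]

end SympAt

/-- The area of the centred disc whose boundary passes through `z`. -/
noncomputable def discArea (z : ℝ × ℝ) : ℝ := Real.pi * (z.1 ^ 2 + z.2 ^ 2)

lemma continuous_discArea : Continuous discArea := by
  unfold discArea; fun_prop

lemma discArea_nonneg (z : ℝ × ℝ) : 0 ≤ discArea z := by
  unfold discArea; positivity

section Plane

/-- The criterion for a plane map to preserve area, in terms of its partial derivatives. -/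
lemma sympAt_plane {f g : ℝ × ℝ → ℝ} {p : ℝ × ℝ} {a b c d : ℝ}
    (hf : ContDiffAt ℝ (⊤ : ℕ∞) f p) (hg : ContDiffAt ℝ (⊤ : ℕ∞) g p)
    (hf' : HasFDerivAt f (a • ContinuousLinearMap.fst ℝ ℝ ℝ + b • ContinuousLinearMap.snd ℝ ℝ ℝ) p)
    (hg' : HasFDerivAt g (c • ContinuousLinearMap.fst ℝ ℝ ℝ + d • ContinuousLinearMap.snd ℝ ℝ ℝ) p)
    (h : a * d - b * c = 1) : SympAt areaForm areaForm (fun z => (f z, g z)) p := by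
  refine SympAt.of_hasFDerivAt (hf.prodMk hg) (hf'.prodMk hg') fun u v => ?_
  simp only [areaForm, ContinuousLinearMap.prod_apply, add_apply,
    smul_apply, ContinuousLinearMap.coe_fst', ContinuousLinearMap.coe_snd',
    smul_eq_mul]
  linear_combination (u.1 * v.2 - u.2 * v.1) * h

lemma hasFDerivAt_comp_fst {h : ℝ → ℝ} {h' : ℝ} {p : ℝ × ℝ} (hh : HasDerivAt h h' p.1) :
    HasFDerivAt (fun z : ℝ × ℝ => h z.1) (h' • ContinuousLinearMap.fst ℝ ℝ ℝ) p :=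
  hh.comp_hasFDerivAt p hasFDerivAt_fst

lemma hasFDerivAt_comp_snd {h : ℝ → ℝ} {h' : ℝ} {p : ℝ × ℝ} (hh : HasDerivAt h h' p.2) :
    HasFDerivAt (fun z : ℝ × ℝ => h z.2) (h' • ContinuousLinearMap.snd ℝ ℝ ℝ) p :=
  hh.comp_hasFDerivAt p hasFDerivAt_snd

/-- The map `(s, t) ↦ (g s, t / g' s)` preserves area. -/
lemma sympAt_stretch_fst {g G : ℝ → ℝ} {p : ℝ × ℝ} (hg : ∀ᶠ s in 𝓝 p.1, HasDerivAt g (G s) s)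
    (hG : ContDiffAt ℝ (⊤ : ℕ∞) G p.1) (hgs : ContDiffAt ℝ (⊤ : ℕ∞) g p.1) (h0 : G p.1 ≠ 0) :
    SympAt areaForm areaForm (fun z => (g z.1, z.2 / G z.1)) p := by
  have hGd := (hG.differentiableAt (by simp)).hasDerivAt
  refine sympAt_plane (a := G p.1) (b := 0) (c := p.2 * (-deriv G p.1 / G p.1 ^ 2))
    (d := (G p.1)⁻¹) (hgs.comp p contDiffAt_fst)
    (contDiffAt_snd.div (hG.comp p contDiffAt_fst) h0) ?_ ?_ (by field_simp; ring)
  · simpa using hasFDerivAt_comp_fst (p := p) hg.self_of_nhds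
  · have h1 := hasFDerivAt_comp_fst (p := p) (hGd.inv h0)
    have h2 := (hasFDerivAt_snd (𝕜 := ℝ) (p := p) (E := ℝ) (F := ℝ)).mul h1
    simp only [div_eq_mul_inv]
    refine h2.congr_fderiv ?_
    ext <;> simp; ring

/-- The map `(p, q) ↦ (p / g' q, g q)` preserves area. -/
lemma sympAt_stretch_snd {g G : ℝ → ℝ} {p : ℝ × ℝ} (hg : ∀ᶠ s in 𝓝 p.2, HasDerivAt g (G s) s)
    (hG : ContDiffAt ℝ (⊤ : ℕ∞) G p.2) (hgs : ContDiffAt ℝ (⊤ : ℕ∞) g p.2) (h0 : G p.2 ≠ 0) :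
    SympAt areaForm areaForm (fun z => (z.1 / G z.2, g z.2)) p := by
  have hGd := (hG.differentiableAt (by simp)).hasDerivAt
  refine sympAt_plane (a := (G p.2)⁻¹) (b := p.1 * (-deriv G p.2 / G p.2 ^ 2)) (c := 0)
    (d := G p.2) (contDiffAt_fst.div (hG.comp p contDiffAt_snd) h0)
    (hgs.comp p contDiffAt_snd) ?_ ?_ (by field_simp; ring)
  · have h1 := hasFDerivAt_comp_snd (p := p) (hGd.inv h0)
    have h2 := (hasFDerivAt_fst (𝕜 := ℝ) (p := p) (E := ℝ) (F := ℝ)).mul h1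
    simp only [div_eq_mul_inv]
    refine h2.congr_fderiv ?_
    ext <;> simp; ring
  · simpa using hasFDerivAt_comp_snd (p := p) hg.self_of_nhds

/-- The map `(v, s) ↦ (v + W s, s)` preserves area. -/
lemma sympAt_shear {W : ℝ → ℝ} (hW : ContDiff ℝ (⊤ : ℕ∞) W) (p : ℝ × ℝ) :
    SympAt areaForm areaForm (fun z => (z.1 + W z.2, z.2)) p := by
  have hd := (hW.contDiffAt.differentiableAt (x := p.2) (by simp)).hasDerivAt
  refine sympAt_plane (a := 1) (b := deriv W p.2) (c := 0) (d := 1)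
    (contDiffAt_fst.add (hW.contDiffAt.comp p contDiffAt_snd)) contDiffAt_snd ?_ ?_ (by ring)
  · exact ((hasFDerivAt_fst (𝕜 := ℝ) (p := p) (E := ℝ) (F := ℝ)).add
      (hasFDerivAt_comp_snd (p := p) hd)).congr_fderiv (by simp)
  · simpa using hasFDerivAt_snd (𝕜 := ℝ) (p := p) (E := ℝ) (F := ℝ)

/-- Symplectic polar coordinates: `(ρ, θ)` is sent to the point at angle `2πθ` on the circle
bounding a disc of area `ρ`. -/
noncomputable def polarMap (z : ℝ × ℝ) : ℝ × ℝ :=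
  (√(z.1 / Real.pi) * Real.cos (2 * Real.pi * z.2), √(z.1 / Real.pi) * Real.sin (2 * Real.pi * z.2))

lemma discArea_polarMap {z : ℝ × ℝ} (hz : 0 ≤ z.1) : discArea (polarMap z) = z.1 := by
  have hp := Real.pi_pos
  have h : √(z.1 / Real.pi) ^ 2 = z.1 / Real.pi := Real.sq_sqrt (by positivity)
  simp only [discArea, polarMap, mul_pow, ← mul_add, Real.cos_sq_add_sin_sq, h]
  field_simp

lemma sympAt_polarMap {z : ℝ × ℝ} (hz : 0 < z.1) : SympAt areaForm areaForm polarMap z := by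
  have hp := Real.pi_pos
  have hq : 0 < z.1 / Real.pi := by positivity
  have h : √(z.1 / Real.pi) ^ 2 = z.1 / Real.pi := Real.sq_sqrt hq.le
  have hs : 0 < √(z.1 / Real.pi) := Real.sqrt_pos.2 hq
  have h1 : HasDerivAt (fun r => √(r / Real.pi)) (1 / Real.pi / (2 * √(z.1 / Real.pi))) z.1 :=
    ((hasDerivAt_id z.1).div_const _).sqrt hq.ne'
  have hc : HasDerivAt (fun θ => Real.cos (2 * Real.pi * θ))
      (-Real.sin (2 * Real.pi * z.2) * (2 * Real.pi)) z.2 := by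
    simpa using ((hasDerivAt_id z.2).const_mul (2 * Real.pi)).cos
  have hsn : HasDerivAt (fun θ => Real.sin (2 * Real.pi * θ))
      (Real.cos (2 * Real.pi * z.2) * (2 * Real.pi)) z.2 := by
    simpa using ((hasDerivAt_id z.2).const_mul (2 * Real.pi)).sin
  have hsm : ContDiffAt ℝ (⊤ : ℕ∞) (fun z : ℝ × ℝ => √(z.1 / Real.pi)) z :=
    (contDiffAt_fst.div_const _).sqrt hq.ne'
  have e1 := (hasFDerivAt_comp_fst h1).mul (hasFDerivAt_comp_snd hc)
  have e2 := (hasFDerivAt_comp_fst h1).mul (hasFDerivAt_comp_snd hsn)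
  refine sympAt_plane (a := Real.cos (2 * Real.pi * z.2) * (1 / Real.pi / (2 * √(z.1 / Real.pi))))
    (b := √(z.1 / Real.pi) * (-Real.sin (2 * Real.pi * z.2) * (2 * Real.pi)))
    (c := Real.sin (2 * Real.pi * z.2) * (1 / Real.pi / (2 * √(z.1 / Real.pi))))
    (d := √(z.1 / Real.pi) * (Real.cos (2 * Real.pi * z.2) * (2 * Real.pi)))
    (hsm.mul (by fun_prop)) (hsm.mul (by fun_prop)) (e1.congr_fderiv ?_) (e2.congr_fderiv ?_) ?_
  · ext <;> simp
  · ext <;> simp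
  · field_simp
    linear_combination Real.cos_sq_add_sin_sq (2 * Real.pi * z.2)

/-- Points with equal polar images have the same radius coordinate and angles that differ by an
integer. -/
lemma polarMap_eq_iff {z w : ℝ × ℝ} (hz : 0 < z.1) (hw : 0 < w.1) (h : polarMap z = polarMap w) :
    z.1 = w.1 ∧ ∃ n : ℤ, z.2 - w.2 = n := by
  have h1 : z.1 = w.1 := by
    rw [← discArea_polarMap hz.le, ← discArea_polarMap hw.le, h]
  refine ⟨h1, ?_⟩
  have hp := Real.pi_pos
  have hs : 0 < √(w.1 / Real.pi) := Real.sqrt_pos.2 (by positivity)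
  simp only [polarMap, Prod.mk.injEq, h1, mul_right_inj' hs.ne'] at h
  have h2 : Real.cos (2 * Real.pi * z.2 - 2 * Real.pi * w.2) = 1 := by
    rw [Real.cos_sub, h.1, h.2]
    linear_combination Real.cos_sq_add_sin_sq (2 * Real.pi * w.2)
  obtain ⟨n, hn⟩ := (Real.cos_eq_one_iff _).1 h2
  refine ⟨n, ?_⟩
  have : (2 * Real.pi) * (z.2 - w.2 - n) = 0 := by linear_combination -hn
  rcases mul_eq_zero.1 this with h | h <;> linarith

end Plane

section Coupling

/-- The form on the product of three planes. -/
abbrev sixForm : (ℝ × ℝ) × (ℝ × ℝ) × (ℝ × ℝ) → (ℝ × ℝ) × (ℝ × ℝ) × (ℝ × ℝ) → ℝ :=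
  prodForm areaForm (prodForm areaForm areaForm)

/-- The map that shifts the first coordinate of the first plane by `c ρ` and the second coordinate
of the third plane by `B ρ`, with the correction of `θ` that makes it symplectic. -/
noncomputable def coupling (c B : ℝ → ℝ) (p : (ℝ × ℝ) × (ℝ × ℝ) × (ℝ × ℝ)) :
    (ℝ × ℝ) × (ℝ × ℝ) × (ℝ × ℝ) :=
  ((p.1.1 + c p.2.1.1, p.1.2),
    (p.2.1.1, p.2.1.2 - deriv c p.2.1.1 * (p.1.2 + 1 / 2) + deriv B p.2.1.1 * p.2.2.1),
    (p.2.2.1, p.2.2.2 + B p.2.1.1))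

lemma sympAt_coupling {c B : ℝ → ℝ} (hc : ContDiff ℝ (⊤ : ℕ∞) c) (hB : ContDiff ℝ (⊤ : ℕ∞) B)
    (p : (ℝ × ℝ) × (ℝ × ℝ) × (ℝ × ℝ)) : SympAt sixForm sixForm (coupling c B) p := by
  have hc' := (contDiff_infty_iff_deriv.1 hc).2
  have hB' := (contDiff_infty_iff_deriv.1 hB).2
  have d : ∀ {h : ℝ → ℝ}, ContDiff ℝ (⊤ : ℕ∞) h → HasFDerivAt
      (fun p : (ℝ × ℝ) × (ℝ × ℝ) × (ℝ × ℝ) => h p.2.1.1) (deriv h p.2.1.1 •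
        (ContinuousLinearMap.fst ℝ ℝ ℝ ∘L ContinuousLinearMap.fst ℝ (ℝ × ℝ) (ℝ × ℝ) ∘L
          ContinuousLinearMap.snd ℝ (ℝ × ℝ) ((ℝ × ℝ) × (ℝ × ℝ)))) p := fun {h} hh =>
    ((hh.contDiffAt.differentiableAt (by simp)).hasDerivAt).comp_hasFDerivAt p
      (hasFDerivAt_snd.fst.fst)
  have e1 : HasFDerivAt (fun p : (ℝ × ℝ) × (ℝ × ℝ) × (ℝ × ℝ) => p)
      (ContinuousLinearMap.id ℝ ((ℝ × ℝ) × (ℝ × ℝ) × (ℝ × ℝ))) p := hasFDerivAt_id p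
  have hd := ((e1.fst.fst.add (d hc)).prodMk e1.fst.snd).prodMk
    ((e1.snd.fst.fst.prodMk ((e1.snd.fst.snd.sub ((d hc').mul (e1.fst.snd.add_const (1 / 2)))).add
      ((d hB').mul e1.snd.snd.fst))).prodMk (e1.snd.snd.fst.prodMk (e1.snd.snd.snd.add (d hB))))
  refine SympAt.of_hasFDerivAt ?_ hd fun u v => ?_
  · unfold coupling
    exact ContDiff.contDiffAt (by fun_prop)
  · simp [prodForm, areaForm]
    ring

end Coupling

section Calculus

lemma exists_smooth_primitive {G : ℝ → ℝ} (hG : ContDiff ℝ (⊤ : ℕ∞) G) (a : ℝ) :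
    (∀ s, HasDerivAt (fun s => ∫ t in a..s, G t) (G s) s) ∧
      ContDiff ℝ (⊤ : ℕ∞) (fun s => ∫ t in a..s, G t) := by
  have hd : ∀ s, HasDerivAt (fun s => ∫ t in a..s, G t) (G s) s := fun s =>
    intervalIntegral.integral_hasDerivAt_right (hG.continuous.intervalIntegrable _ _)
      (hG.continuous.stronglyMeasurableAtFilter _ _) hG.continuous.continuousAt
  refine ⟨hd, contDiff_infty_iff_deriv.2 ⟨fun s => (hd s).differentiableAt, ?_⟩⟩
  rwa [funext fun s => (hd s).deriv]

/-- A smooth function with derivative bounded below by a positive constant has a smooth inverse. -/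
lemma exists_smooth_inverse {g G : ℝ → ℝ} {η : ℝ} (hη : 0 < η) (hg : ContDiff ℝ (⊤ : ℕ∞) g)
    (hd : ∀ s, HasDerivAt g (G s) s) (hG : ∀ s, η ≤ G s) :
    StrictMono g ∧ ∃ γ : ℝ → ℝ, ContDiff ℝ (⊤ : ℕ∞) γ ∧ (∀ s, γ (g s) = s) ∧ (∀ x, g (γ x) = x) ∧
      StrictMono γ ∧ ∀ x, HasDerivAt γ (G (γ x))⁻¹ x := by
  have hpos : ∀ s, 0 < G s := fun s => hη.trans_le (hG s)
  have hmono : StrictMono g := strictMono_of_deriv_pos fun s => by rw [(hd s).deriv]; exact hpos s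
  have hlin : Monotone fun s => g s - η * s := by
    refine monotone_of_deriv_nonneg
      (fun s => ((hd s).sub ((hasDerivAt_id s).const_mul η)).differentiableAt) fun s => ?_
    have h : HasDerivAt (fun s => g s - η * s) (G s - η * 1) s :=
      (hd s).sub ((hasDerivAt_id' s).const_mul η)
    rw [h.deriv]
    linarith [hG s]
  have hsurj : Function.Surjective g := by
    refine hg.continuous.surjective ?_ ?_
    · refine tendsto_atTop_mono' atTop ?_
        ((tendsto_id.const_mul_atTop hη).atTop_add (tendsto_const_nhds (x := g 0)))
      filter_upwards [eventually_ge_atTop 0] with s hs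
      have := hlin hs
      simp at this ⊢
      linarith
    · refine tendsto_atBot_mono' atBot ?_
        ((tendsto_id.const_mul_atBot hη).atBot_add (tendsto_const_nhds (x := g 0)))
      filter_upwards [eventually_le_atBot 0] with s hs
      have := hlin hs
      simp at this ⊢
      linarith
  let Φ := (hmono.orderIsoOfSurjective g hsurj)
  have hΦ : ∀ s, Φ.toHomeomorph s = g s := fun s => rfl
  have hsm : ContDiff ℝ (⊤ : ℕ∞) Φ.toHomeomorph.symm :=
    Φ.toHomeomorph.contDiff_symm_deriv (fun s => (hpos s).ne') hd hg
  have hl : ∀ s, Φ.toHomeomorph.symm (g s) = s := fun s => Φ.toHomeomorph.symm_apply_apply s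
  have hr : ∀ x, g (Φ.toHomeomorph.symm x) = x := fun x => Φ.toHomeomorph.apply_symm_apply x
  refine ⟨hmono, Φ.toHomeomorph.symm, hsm, hl, hr, Φ.symm.strictMono, fun x => ?_⟩
  exact (hd _).of_local_left_inverse hsm.continuous.continuousAt (hpos _).ne'
    (Eventually.of_forall hr)

/-- A smooth step, vanishing to the left of `a` and equal to `1` to the right of `b`. -/
noncomputable def smoothStep (a b s : ℝ) : ℝ := Real.smoothTransition ((s - a) / (b - a))

lemma contDiff_smoothStep (a b : ℝ) : ContDiff ℝ (⊤ : ℕ∞) (smoothStep a b) := by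
  unfold smoothStep
  exact Real.smoothTransition.contDiff.comp (by fun_prop)

lemma smoothStep_nonneg (a b s : ℝ) : 0 ≤ smoothStep a b s := Real.smoothTransition.nonneg _

lemma smoothStep_le_one (a b s : ℝ) : smoothStep a b s ≤ 1 := Real.smoothTransition.le_one _

lemma smoothStep_eq_zero {a b s : ℝ} (h : a < b) (hs : s ≤ a) : smoothStep a b s = 0 :=
  Real.smoothTransition.zero_of_nonpos (div_nonpos_of_nonpos_of_nonneg (by linarith) (by linarith))

lemma smoothStep_eq_one {a b s : ℝ} (h : a < b) (hs : b ≤ s) : smoothStep a b s = 1 :=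
  Real.smoothTransition.one_of_one_le ((one_le_div (by linarith)).2 (by linarith))

/-- A smooth function supported in `[p, q]` and equal to `1` on `[p + h, q - h]`. -/
noncomputable def plateau (p q h s : ℝ) : ℝ :=
  smoothStep p (p + h) s * (1 - smoothStep (q - h) q s)

variable {p q h s : ℝ}

lemma contDiff_plateau : ContDiff ℝ (⊤ : ℕ∞) (plateau p q h) :=
  (contDiff_smoothStep _ _).mul (contDiff_const.sub (contDiff_smoothStep _ _))

lemma plateau_nonneg : 0 ≤ plateau p q h s :=
  mul_nonneg (smoothStep_nonneg _ _ _) (sub_nonneg.2 (smoothStep_le_one _ _ _))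

lemma plateau_le_one : plateau p q h s ≤ 1 :=
  mul_le_one₀ (smoothStep_le_one _ _ _) (sub_nonneg.2 (smoothStep_le_one _ _ _))
    (sub_le_self _ (smoothStep_nonneg _ _ _))

lemma plateau_eq_one (hh : 0 < h) (h1 : p + h ≤ s) (h2 : s ≤ q - h) : plateau p q h s = 1 := by
  rw [plateau, smoothStep_eq_one (by linarith) h1, smoothStep_eq_zero (by linarith) h2]
  simp

lemma plateau_eq_zero_of_le (hh : 0 < h) (h1 : s ≤ p) : plateau p q h s = 0 := by
  rw [plateau, smoothStep_eq_zero (by linarith) h1, zero_mul]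

lemma plateau_eq_zero_of_ge (hh : 0 < h) (h1 : q ≤ s) : plateau p q h s = 0 := by
  rw [plateau, smoothStep_eq_one (by linarith) h1]
  simp

end Calculus

section Slice

/-- A smooth profile `G` slightly wider than the slices of the disc of radius `r`, followed on the
right by slices of width `2πs`, together with its primitive `g` and the inverse `γ` of `g`. -/
structure SliceData (r R e η : ℝ) where
  g : ℝ → ℝ
  G : ℝ → ℝ
  γ : ℝ → ℝ
  s₀ : ℝ
  η₀ : ℝ
  r_lt : r < s₀
  η₀_pos : 0 < η₀
  smooth_g : ContDiff ℝ (⊤ : ℕ∞) g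
  smooth_G : ContDiff ℝ (⊤ : ℕ∞) G
  smooth_γ : ContDiff ℝ (⊤ : ℕ∞) γ
  hasDerivAt_g : ∀ s, HasDerivAt g (G s) s
  le_G : ∀ s, η₀ ≤ G s
  γ_g : ∀ s, γ (g s) = s
  g_γ : ∀ x, g (γ x) = x
  hasDerivAt_γ : ∀ x, HasDerivAt γ (G (γ x))⁻¹ x
  strictMono_g : StrictMono g
  strictMono_γ : StrictMono γ
  g_neg : g (-R) = 0
  sq_lt : ∀ s, s ≤ s₀ → r ^ 2 - s ^ 2 < (G s / 2) ^ 2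
  upper : g s₀ ≤ Real.pi * r ^ 2 + e
  near : ∀ s, -r < s → s < r → s ^ 2 + (G s / 2) ^ 2 < s₀ ^ 2
  neck : ∀ s, r ≤ s → s ≤ s₀ → G s < 4 * Real.pi * s * η
  tail : ∀ s, s₀ ≤ s → G s ≤ 2 * Real.pi * s
  growth : ∀ s, s₀ ≤ s → Real.pi * s ^ 2 ≤ g s + e

lemma integral_disc_slices {r : ℝ} (hr : 0 < r) :
    ∫ s in (-r)..r, 2 * √(r ^ 2 - s ^ 2) = Real.pi * r ^ 2 := by
  have h := integral_sqrt_one_sub_sq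
  have h2 := intervalIntegral.smul_integral_comp_mul_left (a := -1) (b := 1)
    (fun s => 2 * √(r ^ 2 - s ^ 2)) r
  simp only [mul_neg, mul_one, smul_eq_mul] at h2
  rw [← h2]
  have h3 : ∀ s : ℝ, 2 * √(r ^ 2 - (r * s) ^ 2) = 2 * r * √(1 - s ^ 2) := fun s => by
    rw [show r ^ 2 - (r * s) ^ 2 = r ^ 2 * (1 - s ^ 2) by ring, Real.sqrt_mul (by positivity),
      Real.sqrt_sq hr.le, mul_assoc]
  simp only [h3, intervalIntegral.integral_const_mul, h]
  ring

lemma integral_disc_slices_of_le {r a b : ℝ} (hr : 0 < r) (ha : a ≤ -r) (hb : r ≤ b) :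
    ∫ s in a..b, 2 * √(r ^ 2 - s ^ 2) = Real.pi * r ^ 2 := by
  have hc : Continuous fun s : ℝ => 2 * √(r ^ 2 - s ^ 2) := by fun_prop
  have hi : ∀ a b, IntervalIntegrable (fun s : ℝ => 2 * √(r ^ 2 - s ^ 2)) MeasureTheory.volume a b :=
    fun a b => hc.intervalIntegrable a b
  have h0 : ∀ s : ℝ, r ^ 2 ≤ s ^ 2 → 2 * √(r ^ 2 - s ^ 2) = 0 := fun s hs => by
    rw [Real.sqrt_eq_zero_of_nonpos (by linarith), mul_zero]
  have h1 : ∫ s in a..(-r), 2 * √(r ^ 2 - s ^ 2) = 0 := by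
    rw [intervalIntegral.integral_congr (g := fun _ => 0)]
    · simp
    · intro s hs
      rw [Set.uIcc_of_le ha] at hs
      exact h0 s (by nlinarith [hs.2])
  have h2 : ∫ s in r..b, 2 * √(r ^ 2 - s ^ 2) = 0 := by
    rw [intervalIntegral.integral_congr (g := fun _ => 0)]
    · simp
    · intro s hs
      rw [Set.uIcc_of_le hb] at hs
      exact h0 s (by nlinarith [hs.1])
  rw [← intervalIntegral.integral_add_adjacent_intervals (hi a (-r)) (hi (-r) b),
    ← intervalIntegral.integral_add_adjacent_intervals (hi (-r) r) (hi r b), h1, h2,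
    integral_disc_slices hr]
  ring

/-- A smooth positive function lying strictly between `u` and `max u 0 + 3δ/2`. -/
noncomputable def softMax (δ u : ℝ) : ℝ := δ + (u + √(u ^ 2 + δ ^ 2)) / 2

lemma softMax_bounds {δ : ℝ} (hδ : 0 < δ) (u : ℝ) :
    δ ≤ softMax δ u ∧ u < softMax δ u ∧ softMax δ u ≤ max u 0 + 3 / 2 * δ := by
  have h1 : |u| ≤ √(u ^ 2 + δ ^ 2) := Real.abs_le_sqrt (by nlinarith)
  have h2 : √(u ^ 2 + δ ^ 2) ≤ |u| + δ := by
    rw [Real.sqrt_le_left (by positivity)]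
    nlinarith [sq_abs u, mul_nonneg (abs_nonneg u) hδ.le]
  unfold softMax
  refine ⟨?_, ?_, ?_⟩
  · linarith [neg_abs_le u]
  · linarith [le_abs_self u]
  · rcases le_total u 0 with h | h
    · rw [max_eq_right h]; rw [abs_of_nonpos h] at h2; linarith
    · rw [max_eq_left h]; rw [abs_of_nonneg h] at h2; linarith

lemma contDiff_softMax {δ : ℝ} (hδ : 0 < δ) : ContDiff ℝ (⊤ : ℕ∞) (softMax δ) := by
  unfold softMax
  have : ContDiff ℝ (⊤ : ℕ∞) fun u : ℝ => √(u ^ 2 + δ ^ 2) :=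
    ContDiff.sqrt (by fun_prop) fun u => by positivity
  fun_prop

theorem exists_sliceData {r R e η : ℝ} (hr : 0 < r) (hR : r ≤ R) (he : 0 < e) (hη : 0 < η)
    (hη' : η ≤ 1 / 2) : Nonempty (SliceData r R e η) := by
  have hpi := Real.pi_pos
  obtain ⟨h, hh, hhe⟩ : ∃ h : ℝ, 0 < h ∧ Real.pi * (r + 2 * h) ^ 2 ≤ Real.pi * r ^ 2 + e := by
    have : Tendsto (fun h : ℝ => Real.pi * (r + 2 * h) ^ 2) (𝓝[>] 0) (𝓝 (Real.pi * r ^ 2)) := by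
      have : Continuous fun h : ℝ => Real.pi * (r + 2 * h) ^ 2 := by fun_prop
      simpa using (this.tendsto 0).mono_left nhdsWithin_le_nhds
    obtain ⟨h, h1, h2⟩ := ((this.eventually (ge_mem_nhds (lt_add_of_pos_right _ he))).and
      self_mem_nhdsWithin).exists
    exact ⟨h, h2, h1⟩
  obtain ⟨d, hd, hd1, hd2, hd3⟩ : ∃ d : ℝ, 0 < d ∧ d ^ 2 < 2 * r * h ∧ d < 2 * Real.pi * r * η ∧
      2 * d * (R + (r + h)) ≤ e := by
    have t1 : Tendsto (fun d : ℝ => d ^ 2) (𝓝[>] 0) (𝓝 0) := by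
      have : Continuous fun d : ℝ => d ^ 2 := by fun_prop
      simpa using (this.tendsto 0).mono_left nhdsWithin_le_nhds
    have t2 : Tendsto (fun d : ℝ => d) (𝓝[>] 0) (𝓝 0) := nhdsWithin_le_nhds
    have t3 : Tendsto (fun d : ℝ => 2 * d * (R + (r + h))) (𝓝[>] 0) (𝓝 0) := by
      have : Continuous fun d : ℝ => 2 * d * (R + (r + h)) := by fun_prop
      simpa using (this.tendsto 0).mono_left nhdsWithin_le_nhds
    obtain ⟨d, h1, h2, h3, h4⟩ :=
      ((t1.eventually (gt_mem_nhds (show (0 : ℝ) < 2 * r * h by positivity))).and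
      ((t2.eventually (gt_mem_nhds (show (0 : ℝ) < 2 * Real.pi * r * η by positivity))).and
      ((t3.eventually (ge_mem_nhds he)).and self_mem_nhdsWithin))).exists
    exact ⟨d, h4, h1, h2, h3⟩
  set δ := 2 / 3 * d ^ 2 with hδdef
  have hδ : 0 < δ := by positivity
  set s₀ := r + h with hs₀
  set s₁ := r + 2 * h with hs₁
  have h01 : s₀ < s₁ := by linarith
  let q : ℝ → ℝ := fun s => softMax δ (r ^ 2 - s ^ 2)
  have hq : ∀ s, δ ≤ q s ∧ r ^ 2 - s ^ 2 < q s ∧ q s ≤ max (r ^ 2 - s ^ 2) 0 + d ^ 2 := fun s => by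
    have := softMax_bounds hδ (r ^ 2 - s ^ 2)
    refine ⟨this.1, this.2.1, this.2.2.trans_eq ?_⟩
    rw [hδdef]; ring
  have hqs : ∀ s, √(q s) ^ 2 = q s := fun s => Real.sq_sqrt (hδ.le.trans (hq s).1)
  let G : ℝ → ℝ := fun s =>
    (1 - smoothStep s₀ s₁ s) * (2 * √(q s)) + smoothStep s₀ s₁ s * (2 * Real.pi * s)
  have hGl : ∀ s, s ≤ s₀ → G s = 2 * √(q s) := fun s hs => by
    simp [G, smoothStep_eq_zero h01 hs]
  have hGr : ∀ s, s₁ ≤ s → G s = 2 * Real.pi * s := fun s hs => by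
    simp [G, smoothStep_eq_one h01 hs]
  have hqd : ∀ s, r ≤ s → √(q s) ≤ d := fun s hs => by
    rw [Real.sqrt_le_left hd.le]
    have := (hq s).2.2
    rwa [max_eq_right (by nlinarith), zero_add] at this
  have hneck : ∀ s, r ≤ s → 2 * √(q s) < 4 * Real.pi * s * η := fun s hs => by
    have h1 := hqd s hs
    have h2 : 2 * Real.pi * r * η ≤ 2 * Real.pi * s * η := by gcongr
    linarith
  have hGs : ContDiff ℝ (⊤ : ℕ∞) G := by
    have h1 : ContDiff ℝ (⊤ : ℕ∞) fun s => √(q s) :=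
      ContDiff.sqrt ((contDiff_softMax hδ).comp (by fun_prop)) fun s => (hδ.trans_le (hq s).1).ne'
    have h2 := contDiff_smoothStep s₀ s₁
    exact ((contDiff_const.sub h2).mul (contDiff_const.mul h1)).add
      (h2.mul (contDiff_const.mul contDiff_id))
  let η₀ := min (2 * √δ) (2 * Real.pi * r)
  have hη₀ : 0 < η₀ := lt_min (by positivity) (by positivity)
  have hGη : ∀ s, η₀ ≤ G s := fun s => by
    have h1 : η₀ ≤ 2 * √(q s) :=
      (min_le_left _ _).trans (by gcongr; exact (hq s).1)
    rcases le_total s s₀ with hs | hs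
    · rwa [hGl s hs]
    · have h2 : η₀ ≤ 2 * Real.pi * s :=
        (min_le_right _ _).trans (by gcongr; linarith)
      have h3 := smoothStep_nonneg s₀ s₁ s
      have h4 := smoothStep_le_one s₀ s₁ s
      have := mul_le_mul_of_nonneg_left h1 (sub_nonneg.2 h4)
      have := mul_le_mul_of_nonneg_left h2 h3
      simp only [G]
      linarith
  obtain ⟨hgd, hgs⟩ := exists_smooth_primitive hGs (-R)
  obtain ⟨hgm, γ, hγs, hγg, hgγ, hγm, hγd⟩ := exists_smooth_inverse hη₀ hgs hgd hGη
  have hi : ∀ a b, IntervalIntegrable G MeasureTheory.volume a b :=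
    fun a b => hGs.continuous.intervalIntegrable a b
  have hc : Continuous fun s : ℝ => 2 * √(r ^ 2 - s ^ 2) := by fun_prop
  have hlow : ∀ s, r ≤ s → s ≤ s₀ → Real.pi * r ^ 2 ≤ ∫ t in (-R)..s, G t := fun s hs hs' => by
    rw [← integral_disc_slices_of_le hr (neg_le_neg hR) hs]
    refine intervalIntegral.integral_mono_on (by linarith) (hc.intervalIntegrable _ _) (hi _ _)
      fun t ht => ?_
    rw [hGl t (ht.2.trans hs')]
    gcongr
    exact (hq t).2.1.le
  refine ⟨⟨fun s => ∫ t in (-R)..s, G t, G, γ, s₀, η₀, by linarith, hη₀, hgs, hGs, hγs, hgd, hGη,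
    hγg, hgγ, hγd, hgm, hγm, by simp, fun s hs => ?_, ?_, fun s h1 h2 => ?_, fun s h1 h2 => ?_,
    fun s hs => ?_, fun s hs => ?_⟩⟩
  · rw [hGl s hs, mul_div_cancel_left₀ _ two_ne_zero, hqs]
    exact (hq s).2.1
  · have h1 : ∫ t in (-R)..s₀, G t ≤ ∫ t in (-R)..s₀, (2 * √(r ^ 2 - t ^ 2) + 2 * d) := by
      refine intervalIntegral.integral_mono_on (by linarith) (hi _ _)
        (Continuous.intervalIntegrable (by fun_prop) _ _) fun t ht => ?_
      rw [hGl t ht.2]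
      have : √(q t) ≤ √(r ^ 2 - t ^ 2) + d := by
        rw [Real.sqrt_le_left (by positivity)]
        have h1 := (hq t).2.2
        have h2 : max (r ^ 2 - t ^ 2) 0 = √(r ^ 2 - t ^ 2) ^ 2 := by
          rcases le_total (r ^ 2 - t ^ 2) 0 with h | h
          · rw [max_eq_right h, Real.sqrt_eq_zero_of_nonpos h]; simp
          · rw [max_eq_left h, Real.sq_sqrt h]
        have h3 := Real.sqrt_nonneg (r ^ 2 - t ^ 2)
        nlinarith
      linarith
    rw [intervalIntegral.integral_add (hc.intervalIntegrable _ _) (by simp),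
      integral_disc_slices_of_le hr (neg_le_neg hR) (by linarith)] at h1
    simp only [intervalIntegral.integral_const, smul_eq_mul] at h1
    refine h1.trans ?_
    linarith
  · rw [hGl s (by linarith), mul_div_cancel_left₀ _ two_ne_zero, hqs]
    have h3 := (hq s).2.2
    rw [max_eq_left (by nlinarith)] at h3
    nlinarith
  · rw [hGl s h2]
    exact hneck s h1
  · have h1 : 2 * √(q s) ≤ 2 * Real.pi * s := by
      have := hneck s (by linarith)
      have h2 : 0 ≤ 4 * Real.pi * s := mul_nonneg (by positivity) (by linarith)
      nlinarith
    have h4 := smoothStep_le_one s₀ s₁ s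
    have := mul_le_mul_of_nonneg_left h1 (sub_nonneg.2 h4)
    simp only [G]
    linarith
  · rcases le_total s s₁ with h | h
    · have h1 := hlow s₀ (by linarith) le_rfl
      have h2 := hgm.monotone hs
      have h3 : Real.pi * s ^ 2 ≤ Real.pi * s₁ ^ 2 := by gcongr; linarith
      linarith
    · have h1 := hlow s₀ (by linarith) le_rfl
      have h2 := hgm.monotone h01.le
      have h3 : ∫ t in s₁..s, G t = Real.pi * (s ^ 2 - s₁ ^ 2) := by
        rw [intervalIntegral.integral_congr (g := fun t => 2 * Real.pi * t)]
        · rw [intervalIntegral.integral_const_mul, integral_id]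
          ring
        · intro t ht
          rw [Set.uIcc_of_le h] at ht
          exact hGr t ht.1
      have h4 := intervalIntegral.integral_add_adjacent_intervals (hi (-R) s₁) (hi s₁ s)
      linarith

end Slice

section Bend

/-- An angular reparametrisation, together with its derivative, that agrees with
`arctan (2πθ) / 2π` near zero. -/
structure BendData (η : ℝ) where
  B : ℝ → ℝ
  b : ℝ → ℝ
  smooth_B : ContDiff ℝ (⊤ : ℕ∞) B
  smooth_b : ContDiff ℝ (⊤ : ℕ∞) b
  hasDerivAt_B : ∀ θ, HasDerivAt B (b θ) θ
  b_pos : ∀ θ, 0 < b θ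
  b_le_one : ∀ θ, b θ ≤ 1
  one_le : ∀ θ, 1 ≤ b θ * (1 + 16 * Real.pi ^ 2 * η ^ 2)
  strictMono_B : StrictMono B
  abs_le : ∀ θ, |B θ| ≤ |θ|
  b_near : ∀ θ, |θ| < η → b θ = (1 + (2 * Real.pi * θ) ^ 2)⁻¹
  B_near : ∀ θ, |θ| < η → 2 * Real.pi * B θ = Real.arctan (2 * Real.pi * θ)

theorem exists_bendData {η : ℝ} (hη : 0 < η) : Nonempty (BendData η) := by
  have hpi := Real.pi_pos
  let χ := plateau (-(2 * η)) (2 * η) η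
  let b : ℝ → ℝ := fun θ => (1 + (2 * Real.pi * θ) ^ 2 * χ θ)⁻¹
  have hχ : ∀ θ, 0 ≤ χ θ := fun θ => plateau_nonneg
  have hden : ∀ θ, 0 < 1 + (2 * Real.pi * θ) ^ 2 * χ θ := fun θ => by
    have := hχ θ
    positivity
  have hbs : ContDiff ℝ (⊤ : ℕ∞) b := by
    have : ContDiff ℝ (⊤ : ℕ∞) χ := contDiff_plateau
    exact ContDiff.inv (by fun_prop) fun θ => (hden θ).ne'
  have hb0 : ∀ θ, 0 < b θ := fun θ => inv_pos.2 (hden θ)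
  have hb1 : ∀ θ, b θ ≤ 1 := fun θ => inv_le_one_of_one_le₀ (by
    have := hχ θ
    have : 0 ≤ (2 * Real.pi * θ) ^ 2 * χ θ := by positivity
    linarith)
  have hbn : ∀ θ, |θ| ≤ η → b θ = (1 + (2 * Real.pi * θ) ^ 2)⁻¹ := fun θ hθ => by
    have h := abs_le.1 hθ
    have : χ θ = 1 := plateau_eq_one hη (by linarith) (by linarith)
    simp [b, this]
  obtain ⟨hd, hs⟩ := exists_smooth_primitive hbs 0
  have hmono : StrictMono fun s => ∫ t in (0 : ℝ)..s, b t :=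
    strictMono_of_deriv_pos fun s => by rw [(hd s).deriv]; exact hb0 s
  refine ⟨⟨fun s => ∫ t in (0 : ℝ)..s, b t, b, hs, hbs, hd, hb0, hb1, fun θ => ?_, hmono,
    fun θ => ?_, fun θ h => hbn θ h.le, fun θ h => ?_⟩⟩
  · rw [inv_mul_eq_div, one_le_div (hden θ)]
    rcases le_total |θ| (2 * η) with h | h
    · have h1 : θ ^ 2 ≤ (2 * η) ^ 2 := sq_le_sq' (by linarith [(abs_le.1 h).1]) (abs_le.1 h).2
      have h2 : χ θ ≤ 1 := plateau_le_one
      have h3 : (2 * Real.pi * θ) ^ 2 * χ θ ≤ (2 * Real.pi * θ) ^ 2 :=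
        mul_le_of_le_one_right (by positivity) h2
      have h4 : (2 * Real.pi * θ) ^ 2 ≤ (2 * Real.pi) ^ 2 * (2 * η) ^ 2 := by
        rw [mul_pow]; gcongr
      linarith
    · have : χ θ = 0 := by
        rcases le_abs.1 h with h | h
        · exact plateau_eq_zero_of_ge hη h
        · exact plateau_eq_zero_of_le hη (by linarith)
      rw [this]
      have : 0 ≤ 16 * Real.pi ^ 2 * η ^ 2 := by positivity
      linarith
  · have := intervalIntegral.norm_integral_le_of_norm_le_const (a := 0) (b := θ) (f := b) (C := 1)
      fun t _ => by rw [Real.norm_of_nonneg (hb0 t).le]; exact hb1 t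
    simpa using this
  · have h1 : ∀ t, HasDerivAt (fun t => Real.arctan (2 * Real.pi * t) / (2 * Real.pi))
        ((1 + (2 * Real.pi * t) ^ 2)⁻¹) t := fun t => by
      have := (((hasDerivAt_id' t).const_mul (2 * Real.pi)).arctan).div_const (2 * Real.pi)
      refine this.congr_deriv ?_
      field_simp
    have h2 : ∫ t in (0 : ℝ)..θ, b t = ∫ t in (0 : ℝ)..θ, (1 + (2 * Real.pi * t) ^ 2)⁻¹ := by
      refine intervalIntegral.integral_congr fun t ht => hbn t ?_
      have := Set.abs_sub_left_of_mem_uIcc ht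
      simp only [sub_zero] at this
      linarith
    have h3 := intervalIntegral.integral_eq_sub_of_hasDerivAt (a := 0) (b := θ)
      (fun t _ => h1 t) (Continuous.intervalIntegrable
        (Continuous.inv₀ (by fun_prop) fun t => by positivity) _ _)
    rw [h2, h3]
    simp
    field_simp

variable {η : ℝ} (D : BendData η)

/-- The bending map on the right half plane. -/
noncomputable def BendData.bend (z : ℝ × ℝ) : ℝ × ℝ :=
  polarMap (Real.pi * z.1 ^ 2 / D.b (z.2 / (2 * Real.pi * z.1)), D.B (z.2 / (2 * Real.pi * z.1)))

lemma BendData.sympAt_bend {z : ℝ × ℝ} (hz : 0 < z.1) :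
    SympAt areaForm areaForm D.bend z := by
  have hpi := Real.pi_pos
  have h1 : SympAt areaForm areaForm
      (fun z => (Real.pi * z.1 ^ 2, z.2 / (2 * Real.pi * z.1))) z := by
    refine sympAt_stretch_fst (g := fun s => Real.pi * s ^ 2) (G := fun s => 2 * Real.pi * s)
      (Eventually.of_forall fun s => ?_) (by fun_prop) (by fun_prop) (by positivity)
    exact ((hasDerivAt_pow 2 s).const_mul Real.pi).congr_deriv (by simp; ring)
  have h2 : SympAt areaForm areaForm (fun w => (w.1 / D.b w.2, D.B w.2))
      (Real.pi * z.1 ^ 2, z.2 / (2 * Real.pi * z.1)) :=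
    sympAt_stretch_snd (Eventually.of_forall D.hasDerivAt_B) D.smooth_b.contDiffAt
      D.smooth_B.contDiffAt (D.b_pos _).ne'
  exact SympAt.comp (f := fun z : ℝ × ℝ => (Real.pi * z.1 ^ 2 / D.b (z.2 / (2 * Real.pi * z.1)),
    D.B (z.2 / (2 * Real.pi * z.1)))) z
    (sympAt_polarMap (div_pos (by positivity) (D.b_pos _))) (SympAt.comp z h2 h1)

lemma BendData.discArea_bend (z : ℝ × ℝ) :
    discArea (D.bend z) = Real.pi * z.1 ^ 2 / D.b (z.2 / (2 * Real.pi * z.1)) :=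
  discArea_polarMap (div_nonneg (by positivity) (D.b_pos _).le)

lemma BendData.le_discArea_bend (z : ℝ × ℝ) : Real.pi * z.1 ^ 2 ≤ discArea (D.bend z) := by
  rw [D.discArea_bend]
  exact le_div_self (by positivity) (D.b_pos _) (D.b_le_one _)

lemma BendData.discArea_bend_le (z : ℝ × ℝ) :
    discArea (D.bend z) ≤ Real.pi * z.1 ^ 2 * (1 + 16 * Real.pi ^ 2 * η ^ 2) := by
  rw [D.discArea_bend, div_le_iff₀ (D.b_pos _)]
  have h1 : 0 ≤ Real.pi * z.1 ^ 2 := by positivity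
  nlinarith [D.one_le (z.2 / (2 * Real.pi * z.1))]

lemma BendData.bend_injOn {z w : ℝ × ℝ} (hz : 0 < z.1) (hw : 0 < w.1)
    (hz' : |z.2 / (2 * Real.pi * z.1)| < 1 / 2) (hw' : |w.2 / (2 * Real.pi * w.1)| < 1 / 2)
    (h : D.bend z = D.bend w) : z = w := by
  have hpi := Real.pi_pos
  obtain ⟨h1, n, h2⟩ := polarMap_eq_iff (div_pos (by positivity) (D.b_pos _))
    (div_pos (by positivity) (D.b_pos _)) h
  have hB1 := abs_lt.1 ((D.abs_le _).trans_lt hz')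
  have hB2 := abs_lt.1 ((D.abs_le _).trans_lt hw')
  simp only at h1 h2
  have hn : n = 0 := by
    have h3 : (n : ℝ) < 1 := by linarith
    have h4 : (-1 : ℝ) < n := by linarith
    norm_cast at h3 h4
    omega
  rw [hn, Int.cast_zero, sub_eq_zero] at h2
  have h3 := D.strictMono_B.injective h2
  rw [h3, div_left_inj' (D.b_pos _).ne', mul_right_inj' hpi.ne'] at h1
  have h4 : z.1 = w.1 := by nlinarith
  rw [h4, div_left_inj' (by positivity)] at h3
  exact Prod.ext h4 h3

lemma BendData.bend_eq_self {z : ℝ × ℝ} (hz : 0 < z.1) (hz' : |z.2 / (2 * Real.pi * z.1)| < η) :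
    D.bend z = z := by
  have hpi := Real.pi_pos
  set θ := z.2 / (2 * Real.pi * z.1) with hθ
  have hz2 : z.2 = 2 * Real.pi * θ * z.1 := by rw [hθ]; field_simp
  have h0 : (0 : ℝ) < 1 + (2 * Real.pi * θ) ^ 2 := by positivity
  have h1 : √(Real.pi * z.1 ^ 2 / (1 + (2 * Real.pi * θ) ^ 2)⁻¹ / Real.pi) =
      z.1 * √(1 + (2 * Real.pi * θ) ^ 2) := by
    rw [show Real.pi * z.1 ^ 2 / (1 + (2 * Real.pi * θ) ^ 2)⁻¹ / Real.pi =
      z.1 ^ 2 * (1 + (2 * Real.pi * θ) ^ 2) by field_simp, Real.sqrt_mul (by positivity),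
      Real.sqrt_sq hz.le]
  have hs : 0 < √(1 + (2 * Real.pi * θ) ^ 2) := Real.sqrt_pos.2 h0
  simp only [BendData.bend, polarMap, ← hθ, D.B_near θ hz', D.b_near θ hz', h1, Real.cos_arctan,
    Real.sin_arctan]
  ext
  · simp only; field_simp
  · simp only; rw [hz2]; field_simp

end Bend

section Shift

/-- Translations of a disc of area slightly less than `A` can be rearranged to stay in round
discs of nearly minimal area; here in terms of a chart `α` of the disc, in which translations act,
and a chart `α'` of its translates. -/
theorem exists_shift {A e : ℝ} (hA : 0 < A) (he : 0 < e) :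
    ∃ α α' : ℝ × ℝ → ℝ × ℝ, (∀ z, SympAt areaForm areaForm α z) ∧
      (∀ z, discArea z < A → |(α z).2| < 1 / 2) ∧
      (∀ z, discArea z < A → ∀ c, 0 ≤ c →
        SympAt areaForm areaForm α' ((α z).1 + c, (α z).2)) ∧
      (∀ z, discArea z < A → α' (α z) = z) ∧
      (∀ z, discArea z < A → ∀ c, 0 ≤ c → c ≤ A + e →
        discArea (α' ((α z).1 + c, (α z).2)) ≤ A + c + e) ∧
      (∀ z, discArea z < A → A < discArea (α' ((α z).1 + (A + e), (α z).2))) ∧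
      ∀ z w, discArea z < A → discArea w < A → ∀ c, 0 ≤ c →
        α' ((α z).1 + c, (α z).2) = α' ((α w).1 + c, (α w).2) → z = w := by
  have hpi := Real.pi_pos
  set r := √(A / Real.pi) with hrdef
  have hr : 0 < r := Real.sqrt_pos.2 (by positivity)
  have hrA : Real.pi * r ^ 2 = A := by
    rw [hrdef, Real.sq_sqrt (by positivity)]; field_simp
  obtain ⟨η, hη, hη2, hηe⟩ : ∃ η : ℝ, 0 < η ∧ η ≤ 1 / 2 ∧
      (2 * A + 2 * e) * (16 * Real.pi ^ 2 * η ^ 2) ≤ e / 2 := by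
    have t : Tendsto (fun η : ℝ => (2 * A + 2 * e) * (16 * Real.pi ^ 2 * η ^ 2)) (𝓝[>] 0)
        (𝓝 0) := by
      have : Continuous fun η : ℝ => (2 * A + 2 * e) * (16 * Real.pi ^ 2 * η ^ 2) := by fun_prop
      simpa using (this.tendsto 0).mono_left nhdsWithin_le_nhds
    have t2 : Tendsto (fun d : ℝ => d) (𝓝[>] 0) (𝓝 0) := nhdsWithin_le_nhds
    obtain ⟨η, h1, h2, h3⟩ := ((t.eventually (ge_mem_nhds (half_pos he))).and
      ((t2.eventually (ge_mem_nhds (show (0 : ℝ) < 1 / 2 by norm_num))).and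
        self_mem_nhdsWithin)).exists
    exact ⟨η, h3, h2, h1⟩
  obtain ⟨S⟩ := exists_sliceData hr le_rfl (show 0 < e / 4 by linarith) hη hη2
  obtain ⟨D⟩ := exists_bendData hη
  have hGpos : ∀ s, 0 < S.G s := fun s => S.η₀_pos.trans_le (S.le_G s)
  have hs₀ : 0 < S.s₀ := hr.trans S.r_lt
  have hsA : Real.pi * S.s₀ ^ 2 ≤ A + e / 2 := by
    have := S.growth S.s₀ le_rfl
    have := S.upper
    linarith
  have hrs : A < Real.pi * S.s₀ ^ 2 := by
    rw [← hrA]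
    have := S.r_lt
    gcongr
  let β : ℝ × ℝ → ℝ × ℝ := fun z => if z.1 < S.s₀ then z else D.bend z
  let α : ℝ × ℝ → ℝ × ℝ := fun z => (S.g z.1, z.2 / S.G z.1)
  let σ : ℝ × ℝ → ℝ × ℝ := fun z => (S.γ z.1, z.2 / (S.G (S.γ z.1))⁻¹)
  have hθ : ∀ z : ℝ × ℝ, r ≤ z.1 → |z.2| < S.G z.1 / 2 → |z.2 / (2 * Real.pi * z.1)| < 1 / 2 := by
    intro z h1 h2
    have h3 : 0 < z.1 := hr.trans_le h1
    rw [abs_div, abs_of_pos (show 0 < 2 * Real.pi * z.1 by positivity),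
      div_lt_iff₀ (by positivity)]
    rcases le_total z.1 S.s₀ with h | h
    · have := S.neck z.1 h1 h
      have : 4 * Real.pi * z.1 * η ≤ 4 * Real.pi * z.1 * (1 / 2) := by gcongr
      linarith
    · have := S.tail z.1 h
      linarith
  have hneck : ∀ z : ℝ × ℝ, r ≤ z.1 → z.1 ≤ S.s₀ → |z.2| < S.G z.1 / 2 → D.bend z = z := by
    intro z h1 h2 h3
    have h4 : 0 < z.1 := hr.trans_le h1
    refine D.bend_eq_self h4 ?_
    rw [abs_div, abs_of_pos (show 0 < 2 * Real.pi * z.1 by positivity),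
      div_lt_iff₀ (by positivity)]
    have := S.neck z.1 h1 h2
    linarith
  have hleft : ∀ z : ℝ × ℝ, -r < z.1 → z.1 < r → |z.2| < S.G z.1 / 2 →
      discArea z < Real.pi * S.s₀ ^ 2 := by
    intro z h1 h2 h3
    have h4 := S.near z.1 h1 h2
    have h5 : z.2 ^ 2 < (S.G z.1 / 2) ^ 2 := sq_lt_sq' (by linarith [(abs_lt.1 h3).1]) (abs_lt.1 h3).2
    unfold discArea
    gcongr
    linarith
  have hβs : ∀ z : ℝ × ℝ, |z.2| < S.G z.1 / 2 → SympAt areaForm areaForm β z := by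
    intro z h2
    rcases lt_or_ge z.1 S.s₀ with h | h
    · refine (sympAt_id z).congr ?_
      filter_upwards [(isOpen_Iio.preimage continuous_fst).mem_nhds h] with w hw
      exact if_pos hw
    · refine (D.sympAt_bend (hs₀.trans_le h)).congr ?_
      have ho : IsOpen ({w : ℝ × ℝ | r < w.1} ∩ {w : ℝ × ℝ | |w.2| < S.G w.1 / 2}) := by
        have := S.smooth_G.continuous
        exact (isOpen_lt continuous_const continuous_fst).inter
          (isOpen_lt (by fun_prop) (by fun_prop))
      filter_upwards [ho.mem_nhds ⟨S.r_lt.trans_le h, h2⟩] with w hw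
      by_cases hw' : w.1 < S.s₀
      · simp only [β, if_pos hw']
        exact (hneck w hw.1.le hw'.le hw.2).symm
      · simp only [β, if_neg hw']
  have hβi : ∀ z w : ℝ × ℝ, -r < z.1 → |z.2| < S.G z.1 / 2 → -r < w.1 → |w.2| < S.G w.1 / 2 →
      z.1 < S.s₀ → S.s₀ ≤ w.1 → β z ≠ β w := by
    intro z w hz hz' hw hw' h1 h2 h
    simp only [β, if_pos h1, if_neg h2.not_gt] at h
    rcases lt_or_ge z.1 r with h3 | h3
    · have h4 := hleft z hz h3 hz'
      have h5 := D.le_discArea_bend w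
      have h6 : Real.pi * S.s₀ ^ 2 ≤ Real.pi * w.1 ^ 2 := by gcongr
      rw [← h] at h5
      linarith
    · rw [← hneck z h3 h1.le hz'] at h
      have := D.bend_injOn (hr.trans_le h3) (hs₀.trans_le h2) (hθ z h3 hz')
        (hθ w (S.r_lt.le.trans h2) hw') h
      rw [this] at h1
      exact h2.not_gt h1
  have hβinj : ∀ z w : ℝ × ℝ, -r < z.1 → |z.2| < S.G z.1 / 2 → -r < w.1 → |w.2| < S.G w.1 / 2 →
      β z = β w → z = w := by
    intro z w hz hz' hw hw' h
    rcases lt_or_ge z.1 S.s₀ with h1 | h1 <;> rcases lt_or_ge w.1 S.s₀ with h2 | h2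
    · simpa only [β, if_pos h1, if_pos h2] using h
    · exact absurd h (hβi z w hz hz' hw hw' h1 h2)
    · exact absurd h.symm (hβi w z hw hw' hz hz' h2 h1)
    · simp only [β, if_neg h1.not_gt, if_neg h2.not_gt] at h
      exact D.bend_injOn (hs₀.trans_le h1) (hs₀.trans_le h2) (hθ z (S.r_lt.le.trans h1) hz')
        (hθ w (S.r_lt.le.trans h2) hw') h
  have hdisc : ∀ z : ℝ × ℝ, discArea z < A → -r < z.1 ∧ z.1 < r ∧ |z.2| < S.G z.1 / 2 := by
    intro z hz
    rw [← hrA, discArea, mul_lt_mul_iff_right₀ hpi] at hz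
    have h1 : |z.1| < r := abs_lt_of_sq_lt_sq (by nlinarith) hr.le
    have h2 := abs_lt.1 h1
    refine ⟨h2.1, h2.2, abs_lt_of_sq_lt_sq ?_ (by have := hGpos z.1; positivity)⟩
    have := S.sq_lt z.1 (h2.2.le.trans S.r_lt.le)
    linarith
  have hα2 : ∀ z, discArea z < A → |(α z).2| < 1 / 2 := by
    intro z hz
    simp only [α, abs_div, abs_of_pos (hGpos z.1)]
    rw [div_lt_iff₀ (hGpos _)]
    linarith [(hdisc z hz).2.2]
  have hα1 : ∀ z, discArea z < A → 0 < (α z).1 := by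
    intro z hz
    have := S.strictMono_g (hdisc z hz).1
    rwa [S.g_neg] at this
  have hσ : ∀ z : ℝ × ℝ, 0 < z.1 → |z.2| < 1 / 2 → -r < (σ z).1 ∧ |(σ z).2| < S.G (σ z).1 / 2 := by
    intro z h1 h2
    have h3 := S.strictMono_γ h1
    rw [← S.g_neg, S.γ_g] at h3
    refine ⟨h3, ?_⟩
    simp only [σ, div_inv_eq_mul, abs_mul, abs_of_pos (hGpos _)]
    have := hGpos (S.γ z.1)
    nlinarith
  have hσi : ∀ z w : ℝ × ℝ, σ z = σ w → z = w := by
    intro z w h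
    simp only [σ, Prod.mk.injEq] at h
    have h1 := S.strictMono_γ.injective h.1
    rw [h1, div_left_inj' (inv_ne_zero (hGpos _).ne')] at h
    exact Prod.ext h1 h.2
  have hσs : ∀ z, SympAt areaForm areaForm σ z := fun z =>
    sympAt_stretch_fst (Eventually.of_forall S.hasDerivAt_γ)
      (((S.smooth_G.comp S.smooth_γ).inv fun s => (hGpos _).ne').contDiffAt)
      S.smooth_γ.contDiffAt (inv_ne_zero (hGpos _).ne')
  have hαi : ∀ z w : ℝ × ℝ, α z = α w → z = w := by
    intro z w h
    simp only [α, Prod.mk.injEq] at h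
    have h1 := S.strictMono_g.injective h.1
    rw [h1, div_left_inj' (hGpos _).ne'] at h
    exact Prod.ext h1 h.2
  have hsh : ∀ z, discArea z < A → ∀ c, 0 ≤ c → -r < (σ ((α z).1 + c, (α z).2)).1 ∧
      |(σ ((α z).1 + c, (α z).2)).2| < S.G (σ ((α z).1 + c, (α z).2)).1 / 2 := fun z hz c hc =>
    hσ _ (add_pos_of_pos_of_nonneg (hα1 z hz) hc) (hα2 z hz)
  refine ⟨α, fun z => β (σ z), fun z => ?_, hα2, fun z hz c hc => ?_, fun z hz => ?_,
    fun z hz c hc hc' => ?_, fun z hz => ?_, fun z w hz hw c hc h => ?_⟩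
  · exact sympAt_stretch_fst (Eventually.of_forall S.hasDerivAt_g) S.smooth_G.contDiffAt
      S.smooth_g.contDiffAt (hGpos _).ne'
  · exact SympAt.comp _ (hβs _ (hsh z hz c hc).2) (hσs _)
  · have h1 : σ (α z) = z := by
      have := (hGpos z.1).ne'
      simp only [σ, α, S.γ_g]
      ext
      · rfl
      · simp only; field_simp
    change β (σ (α z)) = z
    rw [h1]
    exact if_pos ((hdisc z hz).2.1.trans S.r_lt)
  · have h := hsh z hz c hc
    have hg : S.g (σ ((α z).1 + c, (α z).2)).1 = S.g z.1 + c := S.g_γ _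
    set w := σ ((α z).1 + c, (α z).2)
    have hgz : S.g z.1 ≤ S.g S.s₀ := S.strictMono_g.monotone ((hdisc z hz).2.1.le.trans S.r_lt.le)
    have hup := S.upper
    rw [hrA] at hup
    have hbend : ∀ u : ℝ × ℝ, Real.pi * u.1 ^ 2 ≤ A + c + e / 2 →
        discArea (D.bend u) ≤ A + c + e := by
      intro u hu
      have h1 := D.discArea_bend_le u
      have h2 : Real.pi * u.1 ^ 2 * (16 * Real.pi ^ 2 * η ^ 2) ≤
        (2 * A + 2 * e) * (16 * Real.pi ^ 2 * η ^ 2) := by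
        gcongr; linarith
      linarith
    change discArea (β w) ≤ A + c + e
    by_cases hw : w.1 < S.s₀
    · simp only [β, if_pos hw]
      rcases lt_or_ge w.1 r with h1 | h1
      · linarith [hleft w h.1 h1 h.2]
      · rw [← hneck w h1 hw.le h.2]
        refine hbend w ?_
        have : Real.pi * w.1 ^ 2 ≤ Real.pi * S.s₀ ^ 2 := by
          have := hr.trans_le h1
          gcongr
        linarith
    · simp only [β, if_neg hw]
      refine hbend w ?_
      have := S.growth w.1 (not_lt.1 hw)
      linarith
  · have hc : 0 ≤ A + e := by linarith
    have hg : S.g (σ ((α z).1 + (A + e), (α z).2)).1 = S.g z.1 + (A + e) := S.g_γ _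
    set w := σ ((α z).1 + (A + e), (α z).2)
    have hz1 : 0 < S.g z.1 := hα1 z hz
    have hup := S.upper
    rw [hrA] at hup
    have h1 : S.s₀ < w.1 := S.strictMono_g.lt_iff_lt.1 (by linarith)
    change A < discArea (β w)
    simp only [β, if_neg h1.le.not_gt]
    have h2 : Real.pi * S.s₀ ^ 2 ≤ Real.pi * w.1 ^ 2 := by gcongr
    linarith [D.le_discArea_bend w]
  · have h1 := hsh z hz c hc
    have h2 := hsh w hw c hc
    have h3 := hσi _ _ (hβinj _ _ h1.1 h1.2 h2.1 h2.2 h)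
    simp only [Prod.mk.injEq, add_left_inj] at h3
    exact hαi z w (Prod.ext h3.1 h3.2)

end Shift

section Tail

lemma stretch_fst_injective {g G : ℝ → ℝ} (hg : Function.Injective g) (hG : ∀ s, 0 < G s) :
    Function.Injective fun z : ℝ × ℝ => (g z.1, z.2 / G z.1) := by
  intro z w h
  simp only [Prod.mk.injEq] at h
  have h1 := hg h.1
  rw [h1, div_left_inj' (hG _).ne'] at h
  exact Prod.ext h1 h.2

lemma stretch_snd_injective {g G : ℝ → ℝ} (hg : Function.Injective g) (hG : ∀ s, 0 < G s) :
    Function.Injective fun z : ℝ × ℝ => (z.1 / G z.2, g z.2) := by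
  intro z w h
  simp only [Prod.mk.injEq] at h
  have h1 := hg h.2
  rw [h1, div_left_inj' (hG _).ne'] at h
  exact Prod.ext h.1 h1

lemma abs_integral_plateau_le {b h : ℝ} (hh : 0 < h) (hb : 0 < b) (v : ℝ) :
    |∫ t in (0 : ℝ)..v, plateau (-b) b h t| ≤ b := by
  have hc : Continuous (plateau (-b) b h) := contDiff_plateau.continuous
  have hle : ∀ v, |v| ≤ b → |∫ t in (0 : ℝ)..v, plateau (-b) b h t| ≤ b := fun v hv => by
    have := intervalIntegral.norm_integral_le_of_norm_le_const (a := 0) (b := v)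
      (f := plateau (-b) b h) (C := 1) fun t _ => by
        rw [Real.norm_of_nonneg plateau_nonneg]; exact plateau_le_one
    simp only [Real.norm_eq_abs, sub_zero, one_mul] at this
    exact this.trans hv
  have hi : ∀ x y, IntervalIntegrable (plateau (-b) b h) MeasureTheory.volume x y :=
    fun x y => hc.intervalIntegrable x y
  rcases le_total |v| b with hv | hv
  · exact hle v hv
  rcases le_abs.1 hv with hv | hv
  · have h0 : ∫ t in b..v, plateau (-b) b h t = 0 := by
      rw [intervalIntegral.integral_congr (g := fun _ => 0)]
      · simp
      · intro t ht
        rw [Set.uIcc_of_le hv] at ht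
        exact plateau_eq_zero_of_ge hh ht.1
    rw [← intervalIntegral.integral_add_adjacent_intervals (hi 0 b) (hi b v), h0, add_zero]
    exact hle b (abs_of_pos hb).le
  · have h0 : ∫ t in (-b)..v, plateau (-b) b h t = 0 := by
      rw [intervalIntegral.integral_congr (g := fun _ => 0)]
      · simp
      · intro t ht
        rw [Set.uIcc_of_ge (by linarith)] at ht
        exact plateau_eq_zero_of_le hh ht.2
    rw [← intervalIntegral.integral_add_adjacent_intervals (hi 0 (-b)) (hi (-b) v), h0, add_zero]
    exact hle (-b) (by rw [abs_neg, abs_of_pos hb])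

/-- An increasing function that is the identity on `[-1/2, 1/2]` and maps `[-V, V]` into an
interval that is hardly longer. -/
theorem exists_squeeze {ε V : ℝ} (hε : 0 < ε) (hV : 0 < V) :
    ∃ k k' : ℝ → ℝ, ContDiff ℝ (⊤ : ℕ∞) k ∧ ContDiff ℝ (⊤ : ℕ∞) k' ∧ (∀ v, HasDerivAt k (k' v) v) ∧
      (∀ v, 0 < k' v) ∧ Function.Injective k ∧ (∀ v, |v| ≤ 1 / 2 → k' v = 1) ∧
      ∀ v, |v| ≤ V → |k v| < 1 / 2 + ε := by
  let κ := min 1 (ε / (4 * V))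
  have hκ : 0 < κ := lt_min one_pos (by positivity)
  have hκ1 : κ ≤ 1 := min_le_left _ _
  have hκV : κ * V ≤ ε / 4 := by
    calc κ * V ≤ ε / (4 * V) * V := by gcongr; exact min_le_right _ _
      _ = ε / 4 := by field_simp
  let χ := plateau (-(1 / 2 + ε / 2)) (1 / 2 + ε / 2) (ε / 2)
  have hχs : ContDiff ℝ (⊤ : ℕ∞) χ := contDiff_plateau
  obtain ⟨hd, hs⟩ := exists_smooth_primitive hχs 0
  have hd' : ∀ v, HasDerivAt (fun v => κ * v + (1 - κ) * ∫ t in (0 : ℝ)..v, χ t)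
      (κ + (1 - κ) * χ v) v := fun v => by
    exact (((hasDerivAt_id' v).const_mul κ).add ((hd v).const_mul (1 - κ))).congr_deriv (by simp)
  have hpos : ∀ v, 0 < κ + (1 - κ) * χ v := fun v =>
    add_pos_of_pos_of_nonneg hκ (mul_nonneg (sub_nonneg.2 hκ1) plateau_nonneg)
  refine ⟨_, fun v => κ + (1 - κ) * χ v, by fun_prop, by fun_prop, hd', hpos, ?_, fun v hv => ?_,
    fun v hv => ?_⟩
  · refine StrictMono.injective (strictMono_of_deriv_pos fun v => ?_)
    rw [(hd' v).deriv]
    exact hpos v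
  · have h := abs_le.1 hv
    have : χ v = 1 := plateau_eq_one (by linarith) (by linarith) (by linarith)
    simp [this]
  · have h1 : |∫ t in (0 : ℝ)..v, χ t| ≤ 1 / 2 + ε / 2 :=
      abs_integral_plateau_le (by linarith) (by linarith) v
    have h2 : |κ * v| ≤ ε / 4 := by
      rw [abs_mul, abs_of_pos hκ]
      exact (mul_le_mul_of_nonneg_left hv hκ.le).trans hκV
    have h3 : |(1 - κ) * ∫ t in (0 : ℝ)..v, χ t| ≤ 1 / 2 + ε / 2 := by
      rw [abs_mul, abs_of_nonneg (sub_nonneg.2 hκ1)]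
      exact (mul_le_of_le_one_left (abs_nonneg _) (by linarith)).trans h1
    have := abs_add_le (κ * v) ((1 - κ) * ∫ t in (0 : ℝ)..v, χ t)
    linarith

/-- A disc can be mapped into a long strip so that all but slightly more than area `a` ends up in a
thin tail. -/
theorem exists_tail {a w R ℓ δ : ℝ} (ha : 0 < a) (hw0 : 0 < w) (hw : a < 2 * w * ℓ) (hR : 0 < R)
    (hδ : 0 < δ) :
    ∃ σ : ℝ × ℝ → ℝ × ℝ, (∀ z, SympAt areaForm areaForm σ z) ∧ Function.Injective σ ∧
      ∀ z, discArea z < Real.pi * R ^ 2 → -ℓ < (σ z).2 ∧ |(σ z).1| < w ∧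
        (0 < (σ z).2 → |(σ z).1| < δ ∧ a < discArea z) := by
  have hpi := Real.pi_pos
  set r := √(a / Real.pi) with hrdef
  have hr : 0 < r := Real.sqrt_pos.2 (by positivity)
  have hra : Real.pi * r ^ 2 = a := by
    rw [hrdef, Real.sq_sqrt (by positivity)]; field_simp
  obtain ⟨ε, hε, hε2, hεℓ⟩ : ∃ ε : ℝ, 0 < ε ∧ ε ≤ 1 / 2 ∧
      (1 + 2 * ε) / (2 * w) * (a + 2 * ε) + 1 / δ * ε ≤ ℓ := by
    have t : Tendsto (fun ε : ℝ => (1 + 2 * ε) / (2 * w) * (a + 2 * ε) + 1 / δ * ε) (𝓝[>] 0)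
        (𝓝 (1 / (2 * w) * a)) := by
      have : Continuous fun ε : ℝ => (1 + 2 * ε) / (2 * w) * (a + 2 * ε) + 1 / δ * ε := by fun_prop
      simpa using (this.tendsto 0).mono_left nhdsWithin_le_nhds
    have t2 : Tendsto (fun d : ℝ => d) (𝓝[>] 0) (𝓝 0) := nhdsWithin_le_nhds
    have h0 : 1 / (2 * w) * a < ℓ := by
      rw [div_mul_eq_mul_div, one_mul, div_lt_iff₀ (by positivity)]
      linarith
    obtain ⟨ε, h1, h2, h3⟩ := ((t.eventually (ge_mem_nhds h0)).and
      ((t2.eventually (ge_mem_nhds (show (0 : ℝ) < 1 / 2 by norm_num))).and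
        self_mem_nhdsWithin)).exists
    exact ⟨ε, h3, h2, h1⟩
  obtain ⟨S⟩ := exists_sliceData hr (le_add_of_nonneg_left hR.le) hε one_half_pos le_rfl
  have hGpos : ∀ s, 0 < S.G s := fun s => S.η₀_pos.trans_le (S.le_G s)
  obtain ⟨k, k', hks, hks', hkd, hkpos, hki, hk1, hkV⟩ :=
    exists_squeeze hε (div_pos hR S.η₀_pos)
  set lam := (1 + 2 * ε) / (2 * w) with hlam
  have hlam0 : 0 < lam := by positivity
  let Γ' : ℝ → ℝ := fun s => lam + 1 / δ * smoothStep (a + ε) (a + 2 * ε) s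
  have hΓs' : ContDiff ℝ (⊤ : ℕ∞) Γ' :=
    contDiff_const.add (contDiff_const.mul (contDiff_smoothStep _ _))
  have hΓle : ∀ s, lam ≤ Γ' s := fun s => by
    have := smoothStep_nonneg (a + ε) (a + 2 * ε) s
    exact le_add_of_nonneg_right (by positivity)
  have hΓpos : ∀ s, 0 < Γ' s := fun s => hlam0.trans_le (hΓle s)
  obtain ⟨hΓd, hΓs⟩ := exists_smooth_primitive hΓs' (a + 2 * ε)
  set Γ : ℝ → ℝ := fun s => ∫ t in (a + 2 * ε)..s, Γ' t with hΓ
  have hΓm : StrictMono Γ := strictMono_of_deriv_pos fun s => by rw [(hΓd s).deriv]; exact hΓpos s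
  have hΓ0 : Γ (a + 2 * ε) = 0 := by simp [hΓ]
  have hΓ1 : -ℓ ≤ Γ 0 := by
    have hi : ∀ x y, IntervalIntegrable Γ' MeasureTheory.volume x y :=
      fun x y => hΓs'.continuous.intervalIntegrable x y
    have h1 : ∫ t in (0 : ℝ)..(a + ε), Γ' t = lam * (a + ε) := by
      rw [intervalIntegral.integral_congr (g := fun _ => lam)]
      · simp [mul_comm]
      · intro t ht
        rw [Set.uIcc_of_le (by linarith)] at ht
        simp [Γ', smoothStep_eq_zero (show a + ε < a + 2 * ε by linarith) ht.2]
    have h2 : ∫ t in (a + ε)..(a + 2 * ε), Γ' t ≤ ∫ t in (a + ε)..(a + 2 * ε), (lam + 1 / δ) := by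
      refine intervalIntegral.integral_mono_on (by linarith) (hi _ _) (by simp) fun t _ => ?_
      have := smoothStep_le_one (a + ε) (a + 2 * ε) t
      have : 1 / δ * smoothStep (a + ε) (a + 2 * ε) t ≤ 1 / δ :=
        mul_le_of_le_one_right (by positivity) this
      simp only [Γ']
      linarith
    rw [intervalIntegral.integral_const, smul_eq_mul] at h2
    have h3 := intervalIntegral.integral_add_adjacent_intervals (hi 0 (a + ε))
      (hi (a + ε) (a + 2 * ε))
    simp only [hΓ]
    rw [intervalIntegral.integral_symm]
    linarith
  let σ₁ : ℝ × ℝ → ℝ × ℝ := fun z => (z.1 / S.G z.2, S.g z.2)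
  let σ₂ : ℝ × ℝ → ℝ × ℝ := fun z => (k z.1, z.2 / k' z.1)
  let σ₃ : ℝ × ℝ → ℝ × ℝ := fun z => (z.1 / Γ' z.2, Γ z.2)
  have h₁ : ∀ z, SympAt areaForm areaForm σ₁ z := fun z =>
    sympAt_stretch_snd (Eventually.of_forall S.hasDerivAt_g) S.smooth_G.contDiffAt
      S.smooth_g.contDiffAt (hGpos _).ne'
  have h₂ : ∀ z, SympAt areaForm areaForm σ₂ z := fun z =>
    sympAt_stretch_fst (Eventually.of_forall hkd) hks'.contDiffAt hks.contDiffAt (hkpos _).ne'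
  have h₃ : ∀ z, SympAt areaForm areaForm σ₃ z := fun z =>
    sympAt_stretch_snd (Eventually.of_forall hΓd) hΓs'.contDiffAt hΓs.contDiffAt (hΓpos _).ne'
  refine ⟨fun z => σ₃ (σ₂ (σ₁ z)), fun z => ?_, ?_, fun z hz => ?_⟩
  · exact SympAt.comp (f := fun z => σ₂ (σ₁ z)) z (h₃ _) (SympAt.comp z (h₂ _) (h₁ z))
  · exact (stretch_snd_injective hΓm.injective hΓpos).comp
      ((stretch_fst_injective hki hkpos).comp
        (stretch_snd_injective S.strictMono_g.injective hGpos))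
  have hz' : z.1 ^ 2 + z.2 ^ 2 < R ^ 2 := by
    rwa [discArea, mul_lt_mul_iff_right₀ hpi] at hz
  have hz1 : |z.1| < R := abs_lt_of_sq_lt_sq (by nlinarith) hR.le
  have hz2 := abs_lt.1 (abs_lt_of_sq_lt_sq (a := z.2) (by nlinarith) hR.le)
  have hv : |z.1 / S.G z.2| ≤ R / S.η₀ := by
    rw [abs_div, abs_of_pos (hGpos _)]
    exact div_le_div₀ hR.le hz1.le S.η₀_pos (S.le_G _)
  have hs : 0 < S.g z.2 := by
    rw [← S.g_neg]
    exact S.strictMono_g (by linarith)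
  have hkv := hkV _ hv
  have hdisc : discArea z ≤ a → S.g z.2 / k' (z.1 / S.G z.2) < a + ε := fun h => by
    rw [← hra, discArea, mul_le_mul_iff_right₀ hpi] at h
    have h1 : z.2 ≤ r := abs_le_of_sq_le_sq' (by nlinarith) hr.le |>.2
    have h2 := S.sq_lt z.2 (h1.trans S.r_lt.le)
    have h3 : |z.1| < S.G z.2 / 2 :=
      abs_lt_of_sq_lt_sq (by linarith) (by have := hGpos z.2; positivity)
    have h4 : |z.1 / S.G z.2| ≤ 1 / 2 := by
      rw [abs_div, abs_of_pos (hGpos _), div_le_iff₀ (hGpos _)]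
      linarith
    rw [hk1 _ h4, div_one]
    have h5 := S.strictMono_g (h1.trans_lt S.r_lt)
    have h6 := S.upper
    linarith
  set v := z.1 / S.G z.2
  set s := S.g z.2 / k' v with hsdef
  have hs0 : 0 < s := div_pos hs (hkpos _)
  change -ℓ < Γ s ∧ |k v / Γ' s| < w ∧ (0 < Γ s → |k v / Γ' s| < δ ∧ a < discArea z)
  rw [abs_div, abs_of_pos (hΓpos _)]
  refine ⟨hΓ1.trans_lt (hΓm hs0), ?_, fun h => ⟨?_, ?_⟩⟩
  · rw [div_lt_iff₀ (hΓpos _)]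
    calc |k v| < 1 / 2 + ε := hkv
      _ = w * lam := by rw [hlam]; field_simp
      _ ≤ w * Γ' s := by gcongr; exact hΓle s
  · rw [← hΓ0, hΓm.lt_iff_lt] at h
    have h1 : Γ' s = lam + 1 / δ := by
      simp [Γ', smoothStep_eq_one (show a + ε < a + 2 * ε by linarith) h.le]
    rw [div_lt_iff₀ (hΓpos _), h1, mul_add, mul_one_div_cancel hδ.ne']
    have : 0 < δ * lam := by positivity
    linarith
  · rw [← hΓ0, hΓm.lt_iff_lt] at h
    by_contra! hle
    linarith [hdisc hle]

end Tail

section Profile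

lemma le_integral_plateau {p q h : ℝ} (hh : 0 < h) (hpq : p + h ≤ q - h) :
    q - p - 2 * h ≤ ∫ t in p..q, plateau p q h t := by
  have hc : Continuous (plateau p q h) := contDiff_plateau.continuous
  have hi : ∀ x y, IntervalIntegrable (plateau p q h) MeasureTheory.volume x y :=
    fun x y => hc.intervalIntegrable x y
  have h1 : 0 ≤ ∫ t in p..(p + h), plateau p q h t :=
    intervalIntegral.integral_nonneg (by linarith) fun _ _ => plateau_nonneg
  have h2 : 0 ≤ ∫ t in (q - h)..q, plateau p q h t :=
    intervalIntegral.integral_nonneg (by linarith) fun _ _ => plateau_nonneg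
  have h3 : ∫ t in (p + h)..(q - h), plateau p q h t = q - p - 2 * h := by
    rw [intervalIntegral.integral_congr (g := fun _ => 1)]
    · simp; ring
    · intro t ht
      rw [Set.uIcc_of_le hpq] at ht
      exact plateau_eq_one hh ht.1 ht.2
  have h4 := intervalIntegral.integral_add_adjacent_intervals (hi p (p + h)) (hi (p + h) (q - h))
  have h5 := intervalIntegral.integral_add_adjacent_intervals (hi p (q - h)) (hi (q - h) q)
  linarith

/-- A smooth function descending from `c` to `0` over an interval of length greater than `c`, with
slope greater than `-1`. -/
theorem exists_descent {c p q : ℝ} (hc : 0 < c) (hpq : c < q - p) :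
    ∃ (C : ℝ → ℝ) (ν : ℝ), 0 < ν ∧ ν ≤ 1 ∧ ContDiff ℝ (⊤ : ℕ∞) C ∧ (∀ ρ, ρ ≤ p → C ρ = c) ∧
      (∀ ρ, q ≤ ρ → C ρ = 0) ∧ (∀ ρ, ρ ≤ p → deriv C ρ = 0) ∧ (∀ ρ, q ≤ ρ → deriv C ρ = 0) ∧
      ∀ ρ, -(1 - ν) ≤ deriv C ρ ∧ deriv C ρ ≤ 0 := by
  let h := (q - p - c) / 4
  have hh : 0 < h := by simp only [h]; linarith
  let f := plateau p q h
  have hfs : ContDiff ℝ (⊤ : ℕ∞) f := contDiff_plateau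
  set I := ∫ t in p..q, f t with hI
  have hcI : c < I := by
    have := le_integral_plateau hh (p := p) (q := q) (by simp only [h]; linarith)
    refine lt_of_lt_of_le ?_ this
    simp only [h]
    linarith
  have hI0 : 0 < I := hc.trans hcI
  have hi : ∀ x y, IntervalIntegrable f MeasureTheory.volume x y :=
    fun x y => hfs.continuous.intervalIntegrable x y
  obtain ⟨hd, hs⟩ := exists_smooth_primitive hfs p
  have hd' : ∀ ρ, deriv (fun ρ => c - c / I * ∫ t in p..ρ, f t) ρ = -(c / I * f ρ) := fun ρ =>
    (((hd ρ).const_mul (c / I)).const_sub c).deriv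
  have hcI1 : c / I < 1 := (div_lt_one hI0).2 hcI
  have hcI0 : 0 < c / I := by positivity
  refine ⟨fun ρ => c - c / I * ∫ t in p..ρ, f t, 1 - c / I, by linarith, by linarith, by fun_prop,
    fun ρ hρ => ?_, fun ρ hρ => ?_, fun ρ hρ => ?_, fun ρ hρ => ?_, fun ρ => ?_⟩
  · have : ∫ t in p..ρ, f t = 0 := by
      rw [intervalIntegral.integral_congr (g := fun _ => 0)]
      · simp
      · intro t ht
        rw [Set.uIcc_of_ge hρ] at ht
        exact plateau_eq_zero_of_le hh ht.2
    simp [this]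
  · have h0 : ∫ t in q..ρ, f t = 0 := by
      rw [intervalIntegral.integral_congr (g := fun _ => 0)]
      · simp
      · intro t ht
        rw [Set.uIcc_of_le hρ] at ht
        exact plateau_eq_zero_of_ge hh ht.1
    have h1 := intervalIntegral.integral_add_adjacent_intervals (hi p q) (hi q ρ)
    simp only
    rw [← h1, h0, add_zero, ← hI, div_mul_cancel₀ _ hI0.ne', sub_self]
  · rw [hd', show f ρ = 0 from plateau_eq_zero_of_le hh hρ]
    simp
  · rw [hd', show f ρ = 0 from plateau_eq_zero_of_ge hh hρ]
    simp
  · rw [hd']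
    have h1 : 0 ≤ f ρ := plateau_nonneg
    have h2 : f ρ ≤ 1 := plateau_le_one
    constructor
    · have := mul_le_of_le_one_right hcI0.le h2
      linarith
    · have := mul_nonneg hcI0.le h1
      linarith

/-- The displacement profiles of the successive turns of the fold: on the `n`-th turn a point with
radius coordinate `ρ` is displaced by `C n ρ` in the first plane and by `b n ρ` in the third. -/
structure FoldProfile (c e : ℝ) where
  C : ℕ → ℝ → ℝ
  b : ℕ → ℝ → ℝ
  ν : ℝ
  ν_pos : 0 < ν
  ν_le_one : ν ≤ 1
  smooth_C : ∀ n, ContDiff ℝ (⊤ : ℕ∞) (C n)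
  smooth_b : ∀ n, ContDiff ℝ (⊤ : ℕ∞) (b n)
  C_zero : C 0 = fun _ => 0
  C_nonneg : ∀ n ρ, 0 ≤ C n ρ
  C_le : ∀ n ρ, C n ρ ≤ c
  C_add_le : ∀ n ρ, C n ρ + ρ ≤ max (2 * (c + 2 * e)) ρ
  slope_ge : ∀ n ρ, -(1 - ν) ≤ deriv (C n) ρ
  slope_le : ∀ n ρ, deriv (C n) ρ ≤ 0
  switch : ∀ n ρ, (Even n → 2 * (c + 2 * e) < ρ) → (¬ Even n → ρ < e) → C n ρ = C (n + 1) ρ ∧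
    deriv (C n) ρ = deriv (C (n + 1)) ρ ∧ b n ρ = b (n + 1) ρ ∧
    deriv (b n) ρ = deriv (b (n + 1)) ρ
  sep : ∀ n m ρ, |b n ρ - b m ρ| < 1 → n ≤ m + 1
  adjacent : ∀ n ρ, |b n ρ - b (n + 1) ρ| < 1 → (n = 0 → c + 2 * e < ρ) ∧
    ((C n ρ = 0 ∧ C (n + 1) ρ = c) ∨ (C n ρ = c ∧ C (n + 1) ρ = 0) ∨
      (deriv (b n) ρ = 0 ∧ deriv (b (n + 1)) ρ = 0 ∧ deriv (C n) ρ = 0))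

theorem exists_foldProfile {c e : ℝ} (hc : 0 < c) (he : 0 < e) : Nonempty (FoldProfile c e) := by
  set r := c + 2 * e with hr
  obtain ⟨C, ν, hν, hν1, hCs, hC1, hC2, hC3, hC4, hC5⟩ :=
    exists_descent hc (p := e) (q := r) (by linarith)
  have hCd : Differentiable ℝ C := hCs.differentiable (by simp)
  have hanti : Antitone C := antitone_of_deriv_nonpos hCd fun ρ => (hC5 ρ).2
  have hC0 : ∀ ρ, 0 ≤ C ρ := fun ρ => by
    rw [← hC2 (max r ρ) (le_max_left _ _)]
    exact hanti (le_max_right _ _)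
  have hCc : ∀ ρ, C ρ ≤ c := fun ρ => by
    rw [← hC1 (min e ρ) (min_le_left _ _)]
    exact hanti (min_le_right _ _)
  have hmono : Monotone fun ρ => C ρ + ρ := by
    refine monotone_of_deriv_nonneg (by fun_prop) fun ρ => ?_
    have : HasDerivAt (fun ρ => C ρ + ρ) (deriv C ρ + 1) ρ :=
      (hCd ρ).hasDerivAt.add (hasDerivAt_id' ρ)
    rw [this.deriv]
    linarith [(hC5 ρ).1]
  have hCadd : ∀ ρ, C ρ + ρ ≤ max r ρ := fun ρ => by
    have := hmono (le_max_right r ρ)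
    simp only [hC2 _ (le_max_left r ρ), zero_add] at this
    exact this
  let B := smoothStep r (r + e)
  have hre : r < r + e := by linarith
  have hBs : ContDiff ℝ (⊤ : ℕ∞) B := contDiff_smoothStep _ _
  have hB0 : ∀ ρ, 0 ≤ B ρ := smoothStep_nonneg _ _
  have hB1 : ∀ ρ, B ρ ≤ 1 := smoothStep_le_one _ _
  have hBl : ∀ ρ, ρ < r → deriv B ρ = 0 := fun ρ hρ => by
    have : B =ᶠ[𝓝 ρ] fun _ => 0 := by
      filter_upwards [Iio_mem_nhds hρ] with t ht
      exact smoothStep_eq_zero hre (le_of_lt ht)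
    rw [this.deriv_eq]
    simp
  have hBr : ∀ ρ, r + e < ρ → deriv B ρ = 0 := fun ρ hρ => by
    have : B =ᶠ[𝓝 ρ] fun _ => 1 := by
      filter_upwards [Ioi_mem_nhds hρ] with t ht
      exact smoothStep_eq_one hre (le_of_lt ht)
    rw [this.deriv_eq]
    simp
  let Cn : ℕ → ℝ → ℝ := fun n => if n = 0 then fun _ => 0 else if Even n then C else
    fun ρ => C (ρ - r)
  let bn : ℕ → ℝ → ℝ := fun n ρ => n / 2 + (if Even n then B ρ else 1 / 2)
  have hCe : ∀ n, n ≠ 0 → Even n → Cn n = C := fun n h1 h2 => by simp [Cn, h1, h2]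
  have hCo : ∀ n, ¬ Even n → Cn n = fun ρ => C (ρ - r) := fun n h => by
    have : n ≠ 0 := fun h0 => h (by simp [h0])
    simp [Cn, this, h]
  have hCz : Cn 0 = fun _ => 0 := by simp [Cn]
  have hdo : ∀ ρ, deriv (fun ρ => C (ρ - r)) ρ = deriv C (ρ - r) := fun ρ =>
    deriv_comp_sub_const _ _ _
  have hcases : ∀ P : (ℝ → ℝ) → Prop, P (fun _ => 0) → P C → P (fun ρ => C (ρ - r)) →
      ∀ n, P (Cn n) := by
    intro P h1 h2 h3 n
    by_cases h0 : n = 0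
    · rw [h0, hCz]; exact h1
    by_cases he : Even n
    · rw [hCe n h0 he]; exact h2
    · rw [hCo n he]; exact h3
  have hbe : ∀ n, Even n → bn n = fun ρ => n / 2 + B ρ := fun n h => by
    ext; simp [bn, h]
  have hbo : ∀ n, ¬ Even n → bn n = fun _ => (n : ℝ) / 2 + 1 / 2 := fun n h => by
    ext; simp [bn, h]
  have hdbe : ∀ n, Even n → ∀ ρ, deriv (bn n) ρ = deriv B ρ := fun n h ρ => by
    rw [hbe n h]
    exact ((hBs.differentiable (by simp) ρ).hasDerivAt.const_add _).deriv
  have hdbo : ∀ n, ¬ Even n → ∀ ρ, deriv (bn n) ρ = 0 := fun n h ρ => by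
    rw [hbo n h, deriv_const]
  have hr0 : 0 < r := by positivity
  refine ⟨⟨Cn, bn, ν, hν, hν1, hcases _ contDiff_const hCs (by fun_prop), fun n => ?_, hCz,
    hcases (fun f => ∀ ρ, 0 ≤ f ρ) (fun _ => le_rfl) hC0 fun ρ => hC0 _,
    hcases (fun f => ∀ ρ, f ρ ≤ c) (fun _ => hc.le) hCc fun ρ => hCc _,
    hcases (fun f => ∀ ρ, f ρ + ρ ≤ max (2 * r) ρ) (fun ρ => ?_) (fun ρ => ?_) (fun ρ => ?_),
    hcases (fun f => ∀ ρ, -(1 - ν) ≤ deriv f ρ) (fun ρ => ?_) (fun ρ => (hC5 ρ).1) (fun ρ => ?_),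
    hcases (fun f => ∀ ρ, deriv f ρ ≤ 0) (fun ρ => ?_) (fun ρ => (hC5 ρ).2) (fun ρ => ?_),
    fun n ρ h1 h2 => ?_, fun n m ρ h => ?_, fun n ρ h => ?_⟩⟩
  · by_cases h : Even n
    · rw [hbe n h]; fun_prop
    · rw [hbo n h]; fun_prop
  · rw [zero_add]; exact le_max_right _ _
  · exact (hCadd ρ).trans (max_le_max_right _ (by linarith))
  · have := hCadd (ρ - r)
    rcases le_max_iff.1 this with h | h
    · exact le_max_of_le_left (by linarith)
    · exact le_max_of_le_right (by linarith)
  · simp; linarith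
  · rw [hdo]; exact (hC5 _).1
  · simp
  · rw [hdo]; exact (hC5 _).2
  · by_cases h : Even n
    · have h3 := h1 h
      have h4 : ¬ Even (n + 1) := by simpa [Nat.even_add_one] using h
      have h5 : Cn n ρ = 0 ∧ deriv (Cn n) ρ = 0 := by
        by_cases h0 : n = 0
        · simp [h0, hCz]
        · rw [hCe n h0 h]
          exact ⟨hC2 ρ (by linarith), hC4 ρ (by linarith)⟩
      have h6 : Cn (n + 1) ρ = 0 := by rw [hCo _ h4]; exact hC2 _ (by linarith)
      have h7 : deriv (Cn (n + 1)) ρ = 0 := by rw [hCo _ h4, hdo]; exact hC4 _ (by linarith)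
      rw [h5.1, h5.2, h6, h7, hdbe n h,
        hdbo _ h4, hBr ρ (by linarith), hbe n h, hbo _ h4]
      have : B ρ = 1 := smoothStep_eq_one hre (by linarith)
      simp only [this]
      push_cast
      exact ⟨trivial, trivial, by ring, trivial⟩
    · have h3 := h2 h
      have h4 : Even (n + 1) := by simpa [Nat.even_add_one] using h
      have h5 : Cn n ρ = c := by rw [hCo n h]; exact hC1 _ (by linarith)
      have h6 : deriv (Cn n) ρ = 0 := by rw [hCo n h, hdo]; exact hC3 _ (by linarith)
      rw [h5, h6, hCe _ (by omega) h4, hC1 _ (by linarith), hC3 _ (by linarith), hdbo n h, hdbe _ h4, hBl ρ (by linarith),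
        hbo n h, hbe _ h4]
      have : B ρ = 0 := smoothStep_eq_zero hre (by linarith)
      simp only [this]
      push_cast
      exact ⟨trivial, trivial, by ring, trivial⟩
  · by_contra! hlt
    have hp := (abs_lt.1 h).2
    have h0 := hB0 ρ
    have h1 := hB1 ρ
    have hcast : (m : ℝ) + 2 ≤ n := by exact_mod_cast hlt
    by_cases hn : Even n <;> by_cases hm : Even m
    · rw [hbe n hn, hbe m hm] at hp
      simp only at hp
      linarith
    · have h3 : m + 3 ≤ n := by
        rcases Nat.lt_or_ge (m + 2) n with h | h
        · exact h
        · have : n = m + 2 := by omega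
          rw [this] at hn
          exact absurd (by simpa [Nat.even_add] using hn) hm
      have : (m : ℝ) + 3 ≤ n := by exact_mod_cast h3
      rw [hbe n hn, hbo m hm] at hp
      simp only at hp
      linarith
    · have h3 : m + 3 ≤ n := by
        rcases Nat.lt_or_ge (m + 2) n with h | h
        · exact h
        · have : n = m + 2 := by omega
          rw [this] at hn
          exact absurd (by simpa [Nat.even_add] using hm) hn
      have : (m : ℝ) + 3 ≤ n := by exact_mod_cast h3
      rw [hbo n hn, hbe m hm] at hp
      simp only at hp
      linarith
    · rw [hbo n hn, hbo m hm] at hp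
      simp only at hp
      linarith
  · by_cases hn : Even n
    · have h4 : ¬ Even (n + 1) := by simpa [Nat.even_add_one] using hn
      rw [hbe n hn, hbo _ h4] at h
      push_cast at h
      have h5 := (abs_lt.1 h).1
      have h6 : r < ρ := by
        by_contra! hle
        have : B ρ = 0 := smoothStep_eq_zero hre hle
        linarith
      refine ⟨fun _ => h6, ?_⟩
      have h5 : Cn n ρ = 0 ∧ deriv (Cn n) ρ = 0 := by
        by_cases h0 : n = 0
        · simp [h0, hCz]
        · rw [hCe n h0 hn]
          exact ⟨hC2 ρ h6.le, hC4 ρ h6.le⟩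
      rcases le_or_gt ρ (r + e) with h7 | h7
      · refine Or.inl ⟨h5.1, ?_⟩
        rw [hCo _ h4]
        exact hC1 _ (by linarith)
      · exact Or.inr (Or.inr ⟨(hdbe n hn ρ).trans (hBr ρ h7), hdbo _ h4 ρ, h5.2⟩)
    · have h4 : Even (n + 1) := by simpa [Nat.even_add_one] using hn
      rw [hbo n hn, hbe _ h4] at h
      push_cast at h
      have h5 := (abs_lt.1 h).1
      have h6 : ρ < r + e := by
        by_contra! hle
        have : B ρ = 1 := smoothStep_eq_one hre hle
        linarith
      refine ⟨fun h0 => absurd (by simp [h0]) hn, ?_⟩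
      rcases lt_or_ge ρ r with h7 | h7
      · refine Or.inr (Or.inr ⟨hdbo n hn ρ, (hdbe _ h4 ρ).trans (hBl ρ h7), ?_⟩)
        rw [hCo n hn, hdo]
        exact hC3 _ (by linarith)
      · refine Or.inr (Or.inl ⟨?_, ?_⟩)
        · rw [hCo n hn]
          exact hC1 _ (by linarith)
        · rw [hCe _ (by omega) h4]
          exact hC2 _ h7

end Profile

/-- The index of the half period of length `T / 2` containing `s`, where all of `s < T / 2`
has index `0`. -/
noncomputable def foldLabel (T s : ℝ) : ℕ := ⌊2 * s / T⌋₊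

lemma lt_of_foldLabel {T s : ℝ} (hT : 0 < T) : s < (foldLabel T s + 1) * T / 2 := by
  have h := Nat.lt_floor_add_one (2 * s / T)
  rw [div_lt_iff₀ hT] at h
  unfold foldLabel
  linarith

lemma le_of_foldLabel {T s : ℝ} (hT : 0 < T) (h : foldLabel T s ≠ 0) :
    foldLabel T s * T / 2 ≤ s := by
  have h1 : (foldLabel T s : ℝ) ≤ 2 * s / T := (Nat.le_floor_iff' h).1 le_rfl
  rw [le_div_iff₀ hT] at h1
  linarith

lemma pos_of_foldLabel {T s : ℝ} (hT : 0 < T) (h : foldLabel T s ≠ 0) : 0 < s := by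
  have h1 := le_of_foldLabel hT h
  have h2 : (1 : ℝ) ≤ foldLabel T s := by exact_mod_cast Nat.one_le_iff_ne_zero.2 h
  nlinarith

lemma foldLabel_eq {T s : ℝ} (hT : 0 < T) {n : ℕ} (h : n ≠ 0 → n * T / 2 ≤ s)
    (h' : s < (n + 1) * T / 2) : foldLabel T s = n := by
  unfold foldLabel
  rcases eq_or_ne n 0 with rfl | hn
  · rw [Nat.floor_eq_zero, div_lt_one hT]
    simp only [CharP.cast_eq_zero, zero_add, one_mul] at h'
    linarith
  · rw [Nat.floor_eq_iff' hn, le_div_iff₀ hT, div_lt_iff₀ hT]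
    exact ⟨by linarith [h hn], by linarith⟩

/-- One branch of the fold: move `α z` to the right by `C n ρ` and rotate to compensate. -/
noncomputable def foldBranch (α α' : ℝ × ℝ → ℝ × ℝ) (C b : ℕ → ℝ → ℝ) (n : ℕ)
    (p : (ℝ × ℝ) × (ℝ × ℝ) × (ℝ × ℝ)) : (ℝ × ℝ) × (ℝ × ℝ) × (ℝ × ℝ) :=
  (if n = 0 then p.1 else α' ((α p.1).1 + C n p.2.1.1, (α p.1).2),
    polarMap (p.2.1.1, p.2.1.2 - deriv (C n) p.2.1.1 * ((α p.1).2 + 1 / 2)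
      + deriv (b n) p.2.1.1 * p.2.2.1),
    (p.2.2.1, p.2.2.2 + b n p.2.1.1))

lemma sympAt_foldBranch {c e : ℝ} (P : FoldProfile c e) {α α' : ℝ × ℝ → ℝ × ℝ} {n : ℕ}
    {p : (ℝ × ℝ) × (ℝ × ℝ) × (ℝ × ℝ)} (hρ : 0 < p.2.1.1) (hα : SympAt areaForm areaForm α p.1)
    (hα' : n ≠ 0 →
      SympAt areaForm areaForm α' ((α p.1).1 + P.C n p.2.1.1, (α p.1).2)) :
    SympAt sixForm sixForm (foldBranch α α' P.C P.b n) p := by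
  by_cases hn : n = 0
  · subst hn
    have h1 : SympAt sixForm sixForm (fun q : (ℝ × ℝ) × (ℝ × ℝ) × (ℝ × ℝ) =>
        (q.1, (polarMap q.2.1, q.2.2))) (coupling (P.C 0) (P.b 0) p) :=
      SympAt.prodMap (p := coupling (P.C 0) (P.b 0) p) (sympAt_id _)
        (SympAt.prodMap (sympAt_polarMap (z := (coupling (P.C 0) (P.b 0) p).2.1) hρ)
          (sympAt_id _))
    have h2 := h1.comp p (sympAt_coupling (P.smooth_C 0) (P.smooth_b 0) p)
    refine h2.congr (Eventually.of_forall fun q => ?_)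
    simp [foldBranch, coupling, P.C_zero]
  · have h0 : SympAt sixForm sixForm (fun q : (ℝ × ℝ) × (ℝ × ℝ) × (ℝ × ℝ) =>
        (α q.1, q.2)) p := hα.prodMap (sympAt_id _)
    have h1 : SympAt sixForm sixForm (fun q : (ℝ × ℝ) × (ℝ × ℝ) × (ℝ × ℝ) =>
        (α' q.1, (polarMap q.2.1, q.2.2))) (coupling (P.C n) (P.b n) (α p.1, p.2)) :=
      SympAt.prodMap (p := coupling (P.C n) (P.b n) (α p.1, p.2)) (hα' hn)
        (SympAt.prodMap
          (sympAt_polarMap (z := (coupling (P.C n) (P.b n) (α p.1, p.2)).2.1) hρ) (sympAt_id _))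
    have h2 := SympAt.comp (f := fun q : (ℝ × ℝ) × (ℝ × ℝ) × (ℝ × ℝ) => (α q.1, q.2)) p
      (h1.comp (α p.1, p.2) (sympAt_coupling (P.smooth_C n) (P.smooth_b n) (α p.1, p.2))) h0
    refine h2.congr (Eventually.of_forall fun q => ?_)
    simp [foldBranch, coupling, hn]

/-- The set on which the branches of the fold fit together. -/
structure FoldRegion (A e ℓ T : ℝ) (p : (ℝ × ℝ) × (ℝ × ℝ) × (ℝ × ℝ)) : Prop where
  radius_pos : 0 < p.2.1.1
  lower : -ℓ < p.2.1.2
  height : |p.2.2.2| < 1 / 2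
  disc : 0 < p.2.1.2 → discArea p.1 < A
  base : p.2.1.2 ≤ 0 → p.2.1.1 < A + 3 * e
  odd : ∀ m : ℕ, ¬ Even m → p.2.1.2 = m * T / 2 → 2 * (A + 3 * e) < p.2.1.1
  even : ∀ m : ℕ, m ≠ 0 → Even m → p.2.1.2 = m * T / 2 → p.2.1.1 < e

/-- The fold: the target coordinates are bounded by `discArea` of the source before the folding
starts, and by a universal constant afterwards. -/
theorem exists_fold {A e ℓ : ℝ} (hA : 0 < A) (he : 0 < e) (hℓ : ℓ < 1) :
    ∃ (T : ℝ) (F : (ℝ × ℝ) × (ℝ × ℝ) × (ℝ × ℝ) → (ℝ × ℝ) × (ℝ × ℝ) × (ℝ × ℝ)), 0 < T ∧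
      (∀ p, FoldRegion A e ℓ T p → SympAt sixForm sixForm F p) ∧
      (∀ p q, FoldRegion A e ℓ T p → FoldRegion A e ℓ T q → F p = F q → p = q) ∧
      ∀ p, FoldRegion A e ℓ T p → (p.2.1.2 ≤ 0 →
          discArea (F p).1 + discArea (F p).2.1 = discArea p.1 + p.2.1.1) ∧
        (0 < p.2.1.2 → discArea (F p).1 + discArea (F p).2.1 ≤
          A + e + max (2 * (A + 3 * e)) p.2.1.1) := by
  obtain ⟨α, α', hα, hstrip, hα', hinv, harea, hout, hinj⟩ := exists_shift hA he
  obtain ⟨P⟩ := exists_foldProfile (c := A + e) (e := e) (by positivity) he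
  have hr : A + e + 2 * e = A + 3 * e := by ring
  obtain ⟨T, hT, hTν, hTℓ⟩ : ∃ T : ℝ, 0 < T ∧ T ≤ P.ν ∧ ℓ + T < 1 := by
    refine ⟨min P.ν ((1 - ℓ) / 2), lt_min P.ν_pos (by linarith), min_le_left _ _, ?_⟩
    linarith [min_le_right P.ν ((1 - ℓ) / 2)]
  set F : (ℝ × ℝ) × (ℝ × ℝ) × (ℝ × ℝ) → (ℝ × ℝ) × (ℝ × ℝ) × (ℝ × ℝ) := fun p =>
    foldBranch α α' P.C P.b (foldLabel T p.2.1.2) p with hF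
  have hdisc : ∀ p, FoldRegion A e ℓ T p → foldLabel T p.2.1.2 ≠ 0 → discArea p.1 < A :=
    fun p hp h => hp.disc (pos_of_foldLabel hT h)
  have hfst : ∀ p n, discArea p.1 < A → (foldBranch α α' P.C P.b n p).1 =
      α' ((α p.1).1 + P.C n p.2.1.1, (α p.1).2) := fun p n hp => by
    by_cases hn : n = 0
    · subst hn
      simp [foldBranch, P.C_zero, hinv _ hp]
    · simp [foldBranch, hn]
  have hswitch : ∀ n p, discArea p.1 < A → (Even n → 2 * (A + 3 * e) < p.2.1.1) →
      (¬ Even n → p.2.1.1 < e) →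
      foldBranch α α' P.C P.b n p = foldBranch α α' P.C P.b (n + 1) p := fun n p hp h1 h2 => by
    obtain ⟨h3, h4, h5, h6⟩ := P.switch n p.2.1.1 (by rwa [hr]) h2
    refine Prod.ext ?_ ?_
    · rw [hfst p _ hp, hfst p _ hp, h3]
    · simp only [foldBranch, h4, h5, h6]
  have hsmooth : ∀ p, FoldRegion A e ℓ T p → SympAt sixForm sixForm F p := by
    intro p hp
    obtain ⟨n, hn⟩ : ∃ n, n = foldLabel T p.2.1.2 := ⟨_, rfl⟩
    have hbr : SympAt sixForm sixForm (foldBranch α α' P.C P.b n) p :=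
      sympAt_foldBranch P hp.radius_pos (hα _) fun h =>
        hα' _ (hdisc p hp (hn ▸ h)) _ (P.C_nonneg _ _)
    refine hbr.congr ?_
    have hcs : Continuous fun q : (ℝ × ℝ) × (ℝ × ℝ) × (ℝ × ℝ) => q.2.1.2 := by fun_prop
    have hcρ : Continuous fun q : (ℝ × ℝ) × (ℝ × ℝ) × (ℝ × ℝ) => q.2.1.1 := by fun_prop
    have hcA : Continuous fun q : (ℝ × ℝ) × (ℝ × ℝ) × (ℝ × ℝ) => discArea q.1 :=
      continuous_discArea.comp continuous_fst
    have hup : ∀ᶠ q in 𝓝 p, q.2.1.2 < (n + 1) * T / 2 :=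
      hcs.continuousAt.eventually_lt continuousAt_const (by rw [hn]; exact lt_of_foldLabel hT)
    have hlow : n ≠ 0 → n * T / 2 ≤ p.2.1.2 := fun h => by
      rw [hn] at h ⊢; exact le_of_foldLabel hT h
    by_cases hcr : n ≠ 0 ∧ p.2.1.2 = n * T / 2
    · obtain ⟨hn0, hs⟩ := hcr
      obtain ⟨m, rfl⟩ := Nat.exists_eq_succ_of_ne_zero hn0
      have hlo : ∀ᶠ q in 𝓝 p, m * T / 2 < q.2.1.2 :=
        continuousAt_const.eventually_lt hcs.continuousAt (by rw [hs]; push_cast; linarith)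
      have hAe : ∀ᶠ q in 𝓝 p, discArea q.1 < A :=
        hcA.continuousAt.eventually_lt continuousAt_const (hdisc p hp (hn ▸ hn0))
      have he1 : Even m → ∀ᶠ q in 𝓝 p, 2 * (A + 3 * e) < q.2.1.1 := fun h =>
        continuousAt_const.eventually_lt hcρ.continuousAt
          (hp.odd (m + 1) (by simpa [Nat.even_add_one] using h) hs)
      have he2 : ¬ Even m → ∀ᶠ q in 𝓝 p, q.2.1.1 < e := fun h =>
        hcρ.continuousAt.eventually_lt continuousAt_const
          (hp.even (m + 1) hn0 (by simpa [Nat.even_add_one] using h) hs)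
      filter_upwards [hup, hlo, hAe, eventually_imp_distrib_left.2 he1,
        eventually_imp_distrib_left.2 he2] with q h1 h2 h3 h4 h5
      by_cases hq : (m + 1 : ℕ) * T / 2 ≤ q.2.1.2
      · simp only [hF]
        rw [foldLabel_eq hT (fun _ => hq) h1]
      · simp only [hF]
        rw [foldLabel_eq hT (n := m) (fun _ => h2.le) (by push_cast at hq; linarith)]
        exact hswitch m q h3 h4 h5
    · have hlo : ∀ᶠ q in 𝓝 p, n ≠ 0 → n * T / 2 ≤ q.2.1.2 := by
        refine eventually_imp_distrib_left.2 fun h => ?_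
        have h1 : n * T / 2 < p.2.1.2 := lt_of_le_of_ne (hlow h) fun h2 => hcr ⟨h, h2.symm⟩
        exact (continuousAt_const.eventually_lt hcs.continuousAt h1).mono fun _ h => h.le
      filter_upwards [hup, hlo] with q h1 h2
      simp only [hF]
      rw [foldLabel_eq hT h2 h1]
  have hrange : ∀ p n, FoldRegion A e ℓ T p → foldLabel T p.2.1.2 = n →
      p.2.1.2 < (n + 1) * T / 2 ∧ (n ≠ 0 → n * T / 2 ≤ p.2.1.2) := fun p n hp hn =>
    ⟨hn ▸ lt_of_foldLabel hT, fun h => by subst hn; exact le_of_foldLabel hT h⟩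
  have hpolar : ∀ p q, FoldRegion A e ℓ T p → FoldRegion A e ℓ T q → F p = F q →
      p.2.1.1 = q.2.1.1 ∧ ∃ k : ℤ,
      (p.2.1.2 - deriv (P.C (foldLabel T p.2.1.2)) p.2.1.1 * ((α p.1).2 + 1 / 2)
        + deriv (P.b (foldLabel T p.2.1.2)) p.2.1.1 * p.2.2.1) -
      (q.2.1.2 - deriv (P.C (foldLabel T q.2.1.2)) q.2.1.1 * ((α q.1).2 + 1 / 2)
        + deriv (P.b (foldLabel T q.2.1.2)) q.2.1.1 * q.2.2.1) = k := by
    intro p q hp hq h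
    have h1 : (F p).2.1 = (F q).2.1 := by rw [h]
    simp only [hF, foldBranch] at h1
    exact polarMap_eq_iff (by exact hp.radius_pos) (by exact hq.radius_pos) h1
  have himage : ∀ p q, FoldRegion A e ℓ T p → FoldRegion A e ℓ T q → F p = F q →
      p.2.2.1 = q.2.2.1 ∧
      |P.b (foldLabel T p.2.1.2) p.2.1.1 - P.b (foldLabel T q.2.1.2) p.2.1.1| < 1 := by
    intro p q hp hq h
    have h2 : p.2.2.1 = q.2.2.1 := congrArg (fun z => z.2.2.1) h
    have h3 : p.2.2.2 + P.b (foldLabel T p.2.1.2) p.2.1.1 =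
      q.2.2.2 + P.b (foldLabel T q.2.1.2) q.2.1.1 := congrArg (fun z => z.2.2.2) h
    refine ⟨h2, ?_⟩
    have h5 := abs_lt.1 hp.height
    have h6 := abs_lt.1 hq.height
    rw [← (hpolar p q hp hq h).1] at h3
    rw [abs_lt]
    constructor <;> linarith
  have hne : ∀ p q, FoldRegion A e ℓ T p → FoldRegion A e ℓ T q → F p = F q →
      foldLabel T q.2.1.2 ≠ foldLabel T p.2.1.2 + 1 := by
    intro p q hp hq h hl
    obtain ⟨n, hn⟩ : ∃ n, foldLabel T p.2.1.2 = n := ⟨_, rfl⟩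
    obtain ⟨hρ, k, hk⟩ := hpolar p q hp hq h
    obtain ⟨hx, hb⟩ := himage p q hp hq h
    rw [hn] at hl
    rw [hn, hl] at hb hk
    obtain ⟨hs1, hs2⟩ := hrange p n hp hn
    obtain ⟨ht1, ht2⟩ := hrange q (n + 1) hq hl
    have ht2 := ht2 (by omega)
    push_cast at ht1 ht2
    obtain ⟨had, hcase⟩ := P.adjacent n p.2.1.1 hb
    have hsp : 0 < p.2.1.2 := by
      by_cases h0 : n = 0
      · by_contra! h1
        have := had h0
        have := hp.base h1
        linarith
      · exact pos_of_foldLabel hT (hn ▸ h0)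
    have hpA := hp.disc hsp
    have hqA := hdisc q hq (by omega)
    have h1 : (foldBranch α α' P.C P.b n p).1 = (foldBranch α α' P.C P.b (n + 1) q).1 := by
      have := congrArg Prod.fst h
      simp only [hF] at this
      rwa [hn, hl] at this
    rw [hfst p n hpA, hfst q _ hqA, ← hρ] at h1
    rcases hcase with ⟨h2, h3⟩ | ⟨h2, h3⟩ | ⟨h2, h3, h4⟩
    · rw [h2, h3, add_zero, Prod.mk.eta, hinv _ hpA] at h1
      have := hout _ hqA
      rw [← h1] at this
      linarith
    · rw [h2, h3, add_zero, Prod.mk.eta, hinv _ hqA] at h1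
      have := hout _ hpA
      rw [h1] at this
      linarith
    · rw [← hρ, h2, h3, h4] at hk
      have h5 := abs_lt.1 (hstrip _ hqA)
      have h6 := P.slope_ge (n + 1) p.2.1.1
      have h7 := P.slope_le (n + 1) p.2.1.1
      have h8 : 0 ≤ -deriv (P.C (n + 1)) p.2.1.1 * ((α q.1).2 + 1 / 2) :=
        mul_nonneg (by linarith) (by linarith)
      have h9 : -deriv (P.C (n + 1)) p.2.1.1 * ((α q.1).2 + 1 / 2) ≤ 1 - P.ν := by
        nlinarith
      have h10 : q.2.1.2 - p.2.1.2 < T := by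
        by_cases h0 : n = 0
        · rw [h0] at ht1
          norm_num at ht1
          linarith
        · linarith [hs2 h0]
      have h11 : (k : ℝ) < 0 := by linarith
      have h12 : (-1 : ℝ) < k := by linarith
      have h13 : k < 0 := by exact_mod_cast h11
      have h14 : -1 < k := by exact_mod_cast h12
      omega
  refine ⟨T, F, hT, hsmooth, fun p q hp hq h => ?_, fun p hp => ⟨fun hs => ?_, fun hs => ?_⟩⟩
  · obtain ⟨hx, hb⟩ := himage p q hp hq h
    obtain ⟨hρ, k, hk⟩ := hpolar p q hp hq h
    have hl : foldLabel T p.2.1.2 = foldLabel T q.2.1.2 := by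
      have h1 := P.sep _ _ _ hb
      have h2 := P.sep _ _ _ (by rwa [abs_sub_comm] at hb)
      have h3 := hne p q hp hq h
      have h4 := hne q p hq hp h.symm
      omega
    obtain ⟨n, hn⟩ : ∃ n, foldLabel T p.2.1.2 = n := ⟨_, rfl⟩
    have hn' := hl ▸ hn
    have h1 : p.1 = q.1 := by
      have h1 := congrArg Prod.fst h
      simp only [hF] at h1
      rw [← hl, hn] at h1
      by_cases h0 : n = 0
      · simpa [foldBranch, h0] using h1
      · have hpA := hdisc p hp (by omega)
        have hqA := hdisc q hq (by omega)
        rw [hfst p n hpA, hfst q n hqA, ← hρ] at h1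
        exact hinj _ _ hpA hqA _ (P.C_nonneg _ _) h1
    have h2 : p.2.1.2 = q.2.1.2 := by
      rw [← hl, ← hρ, ← hx, ← h1] at hk
      obtain ⟨hs1, hs2⟩ := hrange p n hp hn
      obtain ⟨ht1, ht2⟩ := hrange q n hq hn'
      have h3 : |(k : ℝ)| < 1 := by
        have hp1 := hp.lower
        have hq1 := hq.lower
        rw [abs_lt]
        by_cases h0 : n = 0
        · rw [h0] at hs1 ht1
          norm_num at hs1 ht1
          constructor <;> linarith
        · have := hs2 h0
          have := ht2 h0
          have := P.ν_le_one
          constructor <;> linarith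
      have h4 : k = 0 := by
        rw [← Int.abs_lt_one_iff]
        exact_mod_cast h3
      rw [h4, Int.cast_zero] at hk
      linarith
    have h3 : p.2.2.2 + P.b (foldLabel T p.2.1.2) p.2.1.1 =
      q.2.2.2 + P.b (foldLabel T q.2.1.2) q.2.1.1 := congrArg (fun z => z.2.2.2) h
    rw [← hl, ← hρ] at h3
    exact Prod.ext h1 (Prod.ext (Prod.ext hρ h2) (Prod.ext hx (by linarith)))
  · have h0 : foldLabel T p.2.1.2 = 0 := by
      by_contra h
      linarith [pos_of_foldLabel hT h]
    simp only [hF, h0, foldBranch, if_true]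
    rw [discArea_polarMap (by exact hp.radius_pos.le)]
  · have hpA := hp.disc hs
    have h1 : discArea (F p).1 ≤ A + P.C (foldLabel T p.2.1.2) p.2.1.1 + e := by
      simp only [hF]
      rw [hfst p _ hpA]
      exact harea _ hpA _ (P.C_nonneg _ _) (P.C_le _ _)
    have h2 : discArea (F p).2.1 = p.2.1.1 := by
      simp only [hF, foldBranch]
      exact discArea_polarMap (by exact hp.radius_pos.le)
    have h3 := P.C_add_le (foldLabel T p.2.1.2) p.2.1.1
    rw [hr] at h3
    linarith

/-- An oscillating width function: constant for `s ≤ 0`, and for `s > 0` alternating between its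
extreme values at the multiples of `T / 2`. -/
lemma exists_width {w₀ m M T : ℝ} (hT : 0 < T) (hm : m ≤ w₀) (hM : w₀ ≤ M) :
    ∃ W : ℝ → ℝ, ContDiff ℝ (⊤ : ℕ∞) W ∧ (∀ s, m ≤ W s) ∧ (∀ s, W s ≤ M) ∧
      (∀ s ≤ 0, W s = w₀) ∧ (∀ n : ℕ, ¬ Even n → W (n * T / 2) = M) ∧
      ∀ n : ℕ, n ≠ 0 → Even n → W (n * T / 2) = m := by
  have hS : ∀ n : ℕ, n ≠ 0 → smoothStep 0 (T / 4) (n * T / 2) = 1 := fun n hn => by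
    have : (1 : ℝ) ≤ n := by exact_mod_cast Nat.one_le_iff_ne_zero.2 hn
    exact smoothStep_eq_one (by positivity) (by nlinarith)
  have hcos : ∀ n : ℕ, Real.cos (2 * Real.pi * (n * T / 2) / T) = (-1) ^ n := fun n => by
    rw [← Real.cos_nat_mul_pi]
    congr 1
    field_simp
  refine ⟨fun s => w₀ + (m + (M - m) * ((1 - Real.cos (2 * Real.pi * s / T)) / 2) - w₀) *
    smoothStep 0 (T / 4) s, ?_, fun s => ?_, fun s => ?_, fun s hs => ?_, fun n hn => ?_,
    fun n hn hn' => ?_⟩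
  · have := contDiff_smoothStep 0 (T / 4)
    fun_prop
  · have h1 := smoothStep_nonneg 0 (T / 4) s
    have h2 := smoothStep_le_one 0 (T / 4) s
    have h3 := Real.cos_le_one (2 * Real.pi * s / T)
    have h4 : 0 ≤ (M - m) * ((1 - Real.cos (2 * Real.pi * s / T)) / 2) :=
      mul_nonneg (by linarith) (by linarith)
    nlinarith [mul_nonneg h4 h1, mul_nonneg (sub_nonneg.2 hm) (sub_nonneg.2 h2)]
  · have h1 := smoothStep_nonneg 0 (T / 4) s
    have h2 := smoothStep_le_one 0 (T / 4) s
    have h3 := Real.neg_one_le_cos (2 * Real.pi * s / T)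
    have h4 : 0 ≤ (M - m) * (1 - (1 - Real.cos (2 * Real.pi * s / T)) / 2) :=
      mul_nonneg (by linarith) (by linarith)
    nlinarith [mul_nonneg h4 h1, mul_nonneg (sub_nonneg.2 hM) (sub_nonneg.2 h2)]
  · simp only
    rw [smoothStep_eq_zero (by positivity) hs]
    ring
  · simp only
    rw [hS n (by rintro rfl; simp at hn), hcos, (Nat.not_even_iff_odd.1 hn).neg_one_pow]
    ring
  · simp only
    rw [hS n hn, hcos, hn'.neg_one_pow]
    ring

/-- The plane can be squeezed into a strip of width one. -/
lemma exists_strip : ∃ ψ : ℝ × ℝ → ℝ × ℝ, (∀ z, SympAt areaForm areaForm ψ z) ∧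
    Function.Injective ψ ∧ ∀ z, |(ψ z).2| < 1 / 2 := by
  have hG : ∀ s : ℝ, 0 < 1 / (1 + s ^ 2) / Real.pi := fun s => by positivity
  refine ⟨fun z => (z.1 / (1 / (1 + z.2 ^ 2) / Real.pi), Real.arctan z.2 / Real.pi), fun z => ?_,
    stretch_snd_injective (g := fun s => Real.arctan s / Real.pi)
      (G := fun s => 1 / (1 + s ^ 2) / Real.pi) (fun s t h => ?_) hG, fun z => ?_⟩
  · refine sympAt_stretch_snd (g := fun s => Real.arctan s / Real.pi)
      (G := fun s => 1 / (1 + s ^ 2) / Real.pi)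
      (Eventually.of_forall fun s => (Real.hasDerivAt_arctan s).div_const _) ?_ ?_ (hG _).ne'
    · refine ContDiffAt.div_const (contDiffAt_const.div (by fun_prop) ?_) _
      positivity
    · exact (Real.contDiff_arctan.div_const _).contDiffAt
  · exact Real.arctan_injective ((div_left_inj' Real.pi_ne_zero).1 h)
  · have h1 := Real.neg_pi_div_two_lt_arctan z.2
    have h2 := Real.arctan_lt_pi_div_two z.2
    have hpi := Real.pi_pos
    rw [abs_lt, lt_div_iff₀ hpi, div_lt_iff₀ hpi]
    constructor <;> linarith

/-- The stabilized ellipsoid embeds into the stabilized ball of capacity `μ > 3x / (x + 1)`. -/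
theorem exists_planes_embedding {x μ : ℝ} (hx : 1 ≤ x) (hμ : 3 * x / (x + 1) < μ) :
    ∃ (τ : ℝ) (F : (ℝ × ℝ) × (ℝ × ℝ) × (ℝ × ℝ) → (ℝ × ℝ) × (ℝ × ℝ) × (ℝ × ℝ)), 0 < τ ∧
      (∀ p, discArea p.1 + discArea p.2.1 / x < 1 + τ → SympAt sixForm sixForm F p) ∧
      (∀ p q, discArea p.1 + discArea p.2.1 / x < 1 + τ →
        discArea q.1 + discArea q.2.1 / x < 1 + τ → F p = F q → p = q) ∧
      ∀ p, discArea p.1 + discArea p.2.1 / x < 1 + τ →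
        discArea (F p).1 + discArea (F p).2.1 ≤ μ := by
  have hx0 : 0 < x := by linarith
  obtain ⟨a, ha⟩ : ∃ a, a = x / (x + 1) := ⟨_, rfl⟩
  have hax : a / x = 1 - a := by rw [ha]; field_simp; ring
  have ha2 : 1 / 2 ≤ a := by
    rw [ha, div_le_div_iff₀ (by norm_num) (by positivity)]
    linarith
  have hμa : 3 * a < μ := by rwa [ha, ← mul_div_assoc]
  obtain ⟨e, he, heμ⟩ : ∃ e, 0 < e ∧ 3 * a + 11 * e = μ :=
    ⟨(μ - 3 * a) / 11, by linarith, by ring⟩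
  obtain ⟨A, hAa⟩ : ∃ A, A = a + e := ⟨_, rfl⟩
  have hA : 0 < A := by linarith
  have haA : a / A < 1 := by rw [div_lt_one hA]; linarith
  obtain ⟨ℓ, hℓ⟩ : ∃ ℓ, ℓ = (a / A + 1) / 2 := ⟨_, rfl⟩
  obtain ⟨T, F, hT, hF1, hF2, hF3⟩ := exists_fold hA he (ℓ := ℓ) (by linarith)
  obtain ⟨W, hW, hWm, hWM, hW0, hWodd, hWeven⟩ := exists_width (w₀ := (A + e) / 2) (m := e / 2)
    (M := 2 * (A + 3 * e) + e / 2) hT (by linarith) (by linarith)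
  have hAℓ : a < 2 * (A / 2) * ℓ := by
    have : A * (a / A) = a := by field_simp
    rw [hℓ]
    linarith
  obtain ⟨σ, hσ1, hσ2, hσ3⟩ := exists_tail (a := a) (w := A / 2) (R := x * (1 + e)) (ℓ := ℓ)
    (δ := e / 4) (by linarith) (by linarith) hAℓ (by positivity) (by positivity)
  obtain ⟨ψ, hψ1, hψ2, hψ3⟩ := exists_strip
  set g : (ℝ × ℝ) × (ℝ × ℝ) × (ℝ × ℝ) → (ℝ × ℝ) × (ℝ × ℝ) × (ℝ × ℝ) := fun p =>
    (p.1, ((σ p.2.1).1 + W (σ p.2.1).2, (σ p.2.1).2), ψ p.2.2) with hg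
  have hg1 : ∀ p, SympAt sixForm sixForm g p := fun p =>
    (sympAt_id p.1).prodMap (((sympAt_shear hW (σ p.2.1)).comp p.2.1 (hσ1 p.2.1)).prodMap
      (hψ1 p.2.2))
  have hg2 : Function.Injective g := fun p q h => by
    simp only [hg, Prod.mk.injEq] at h
    obtain ⟨h1, ⟨h2, h3⟩, h4⟩ := h
    rw [h3, add_left_inj] at h2
    exact Prod.ext h1 (Prod.ext (hσ2 (Prod.ext h2 h3)) (hψ2 h4))
  have htail : ∀ p : (ℝ × ℝ) × (ℝ × ℝ) × (ℝ × ℝ), discArea p.1 + discArea p.2.1 / x < 1 + e →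
      -ℓ < (σ p.2.1).2 ∧ |(σ p.2.1).1| < A / 2 ∧
        (0 < (σ p.2.1).2 → |(σ p.2.1).1| < e / 4 ∧ a < discArea p.2.1) := fun p hp => by
    refine hσ3 _ ?_
    have h1 : discArea p.2.1 / x < 1 + e := by linarith [discArea_nonneg p.1]
    rw [div_lt_iff₀ hx0] at h1
    have h2 : 1 ≤ x * (1 + e) := by nlinarith
    nlinarith [Real.pi_gt_three]
  have hdisc : ∀ p : (ℝ × ℝ) × (ℝ × ℝ) × (ℝ × ℝ), discArea p.1 + discArea p.2.1 / x < 1 + e →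
      0 < (σ p.2.1).2 → discArea p.1 < A := fun p hp hs => by
    have h1 := (div_lt_div_iff_of_pos_right hx0).2 ((htail p hp).2.2 hs).2
    linarith
  have hregion : ∀ p : (ℝ × ℝ) × (ℝ × ℝ) × (ℝ × ℝ), discArea p.1 + discArea p.2.1 / x < 1 + e →
      FoldRegion A e ℓ T (g p) := fun p hp => by
    obtain ⟨h1, h2, h3⟩ := htail p hp
    have h2 := abs_lt.1 h2
    have hm := hWm (σ p.2.1).2
    refine ⟨?_, h1, hψ3 _, hdisc p hp, fun hs => ?_, fun n hn hs => ?_, fun n hn hn' hs => ?_⟩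
    · simp only [hg]
      rcases le_or_gt (σ p.2.1).2 0 with hs | hs
      · rw [hW0 _ hs]
        linarith
      · have := abs_lt.1 (h3 hs).1
        linarith
    · simp only [hg] at hs ⊢
      rw [hW0 _ hs]
      linarith
    · simp only [hg] at hs ⊢
      have hn0 : 0 < n := Nat.pos_of_ne_zero (by rintro rfl; simp at hn)
      have := abs_lt.1 (h3 (by rw [hs]; positivity)).1
      rw [hs, hWodd n hn] at *
      linarith
    · simp only [hg] at hs ⊢
      have hn0 : 0 < n := Nat.pos_of_ne_zero hn
      have := abs_lt.1 (h3 (by rw [hs]; positivity)).1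
      rw [hs, hWeven n hn hn'] at *
      linarith
  refine ⟨e, fun p => F (g p), he, fun p hp => (hF1 _ (hregion p hp)).comp p (hg1 p),
    fun p q hp hq h => hg2 (hF2 _ _ (hregion p hp) (hregion q hq) h), fun p hp => ?_⟩
  obtain ⟨h1, h2, h3⟩ := htail p hp
  have hl := hF3 _ (hregion p hp)
  rcases le_or_gt (σ p.2.1).2 0 with hs | hs
  · have h4 := hl.1 hs
    have h5 := (hregion p hp).base hs
    have h6 : 0 ≤ discArea p.2.1 / x := div_nonneg (discArea_nonneg _) hx0.le
    have h7 : discArea (g p).1 = discArea p.1 := rfl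
    linarith
  · have h4 := hl.2 hs
    have h5 := abs_lt.1 (h3 hs).1
    have h6 := hWM (σ p.2.1).2
    have h7 : (g p).2.1.1 = (σ p.2.1).1 + W (σ p.2.1).2 := rfl
    have h8 : max (2 * (A + 3 * e)) (g p).2.1.1 ≤ 2 * (A + 3 * e) + e :=
      max_le (by linarith) (by linarith)
    linarith

/-- Real coordinates on `ℂ ^ (m + 3)`, with the first three planes split off. -/
noncomputable def planesEquiv (m : ℕ) : (Fin (m + 3) → ℂ) ≃L[ℝ]
    ((ℝ × ℝ) × (ℝ × ℝ) × (ℝ × ℝ)) × (Fin m → ℂ) :=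
  LinearEquiv.toContinuousLinearEquiv
    { toFun := fun z => ((((z 0).re, (z 0).im), ((z 1).re, (z 1).im), ((z 2).re, (z 2).im)),
        fun j => z j.succ.succ.succ)
      invFun := fun p => Fin.cons ⟨p.1.1.1, p.1.1.2⟩ (Fin.cons ⟨p.1.2.1.1, p.1.2.1.2⟩
        (Fin.cons ⟨p.1.2.2.1, p.1.2.2.2⟩ p.2))
      map_add' := fun _ _ => rfl
      map_smul' := fun _ _ => by ext <;> simp
      left_inv := fun z => by
        funext j
        refine Fin.cases rfl (fun j => Fin.cases rfl (fun j => Fin.cases rfl (fun j => rfl) j) j) j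
      right_inv := fun _ => rfl }

lemma omega0_planesEquiv {m : ℕ} (u v : Fin (m + 3) → ℂ) :
    prodForm sixForm omega0 (planesEquiv m u) (planesEquiv m v) = omega0 u v := by
  have h : ∀ a b : ℂ, ((starRingEnd ℂ) a * b).im = a.re * b.im - a.im * b.re := fun a b => by
    simp; ring
  have h2 : ∀ w : Fin (m + 3) → ℂ, planesEquiv m w =
    ((((w 0).re, (w 0).im), ((w 1).re, (w 1).im), ((w 2).re, (w 2).im)),
        fun j => w j.succ.succ.succ) := fun _ => rfl
  rw [h2, h2, omega0, Fin.sum_univ_succ, Fin.sum_univ_succ, Fin.sum_univ_succ]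
  simp only [prodForm, areaForm, omega0, ← h]
  simp [add_assoc]

lemma discArea_complex (z : ℂ) : discArea (z.re, z.im) = Real.pi * ‖z‖ ^ 2 := by
  rw [discArea, ← Complex.normSq_eq_norm_sq, Complex.normSq_apply]
  ring

theorem sympEmb_stabEll {x μ : ℝ} (m : ℕ) (hx : 1 ≤ x) (hμ : 3 * x / (x + 1) < μ) :
    SympEmb (stabEll 1 x (m + 1)) (stabEll μ μ (m + 1)) := by
  obtain ⟨τ, F, hτ, hF1, hF2, hF3⟩ := exists_planes_embedding hx hμ
  have hμ0 : 0 < μ := lt_trans (by positivity) hμ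
  set Φ := planesEquiv m with hΦ
  set G : (Fin (m + 3) → ℂ) → (Fin (m + 3) → ℂ) := fun z => Φ.symm (F (Φ z).1, (Φ z).2) with hG
  set W : Set (Fin (m + 3) → ℂ) :=
    {z | discArea (Φ z).1.1 + discArea (Φ z).1.2.1 / x < 1 + τ} with hW
  have hsymp : ∀ z ∈ W, SympAt omega0 omega0 G z := fun z hz => by
    have h1 : SympAt omega0 (prodForm sixForm omega0) (fun z => Φ z) z :=
      ContinuousLinearMap.sympAt (Φ : (Fin (m + 3) → ℂ) →L[ℝ] ((ℝ × ℝ) × (ℝ × ℝ) × (ℝ × ℝ)) × (Fin m → ℂ))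
        omega0_planesEquiv z
    have h2 : SympAt (prodForm sixForm omega0) (prodForm sixForm omega0)
        (fun q : ((ℝ × ℝ) × (ℝ × ℝ) × (ℝ × ℝ)) × (Fin m → ℂ) => (F q.1, q.2)) (Φ z) :=
      (hF1 _ hz).prodMap (sympAt_id _)
    have h3 : SympAt (prodForm sixForm omega0) omega0 (fun q => Φ.symm q) (F (Φ z).1, (Φ z).2) :=
      ContinuousLinearMap.sympAt
        (Φ.symm : ((ℝ × ℝ) × (ℝ × ℝ) × (ℝ × ℝ)) × (Fin m → ℂ) →L[ℝ] (Fin (m + 3) → ℂ))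
        (fun u v => by simp [← omega0_planesEquiv, hΦ]) _
    exact SympAt.comp (f := fun z => (F (Φ z).1, (Φ z).2)) z h3
      (SympAt.comp (f := fun z => Φ z) z h2 h1)
  have hsub : stabEll 1 x (m + 1) ⊆ W := fun z hz => by
    have h1 : discArea (Φ z).1.1 = Real.pi * ‖z 0‖ ^ 2 := discArea_complex _
    have h2 : discArea (Φ z).1.2.1 = Real.pi * ‖z 1‖ ^ 2 := discArea_complex _
    have h3 : Real.pi * (‖z 0‖ ^ 2 / 1 + ‖z 1‖ ^ 2 / x) ≤ 1 := hz
    have h4 : Real.pi * (‖z 0‖ ^ 2 / 1 + ‖z 1‖ ^ 2 / x) =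
      Real.pi * ‖z 0‖ ^ 2 + Real.pi * ‖z 1‖ ^ 2 / x := by ring
    change discArea (Φ z).1.1 + discArea (Φ z).1.2.1 / x < 1 + τ
    rw [h1, h2, ← h4]
    linarith
  refine ⟨W, G, ?_, hsub, fun z hz => (hsymp z hz).1.contDiffWithinAt,
    fun z hz w hw h => ?_, ?_, fun z hz => (hsymp z hz).2⟩
  · have := continuous_discArea
    exact isOpen_lt (by fun_prop) continuous_const
  · have h1 := Φ.symm.injective h
    simp only [Prod.mk.injEq] at h1
    exact Φ.injective (Prod.ext (hF2 _ _ hz hw h1.1) h1.2)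
  · rintro _ ⟨z, hz, rfl⟩
    have h := hF3 _ (hsub hz)
    have h1 : discArea (F (Φ z).1).1 = Real.pi * ‖G z 0‖ ^ 2 := discArea_complex (G z 0)
    have h2 : discArea (F (Φ z).1).2.1 = Real.pi * ‖G z 1‖ ^ 2 := discArea_complex (G z 1)
    rw [h1, h2, ← mul_add] at h
    change Real.pi * (‖G z 0‖ ^ 2 / μ + ‖G z 1‖ ^ 2 / μ) ≤ 1
    rwa [← add_div, ← mul_div_assoc, div_le_one hμ0]

end

/-- (Hind's folding bound.) For every integer `k ≥ 1` and every real `x ≥ 1`,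
`c_k(x) ≤ 3x/(x+1)`. -/
theorem ck_le_fold (k : ℕ) (hk : 1 ≤ k) (x : ℝ) (hx : 1 ≤ x) :
    ck k x ≤ 3 * x / (x + 1) := by
  obtain ⟨m, rfl⟩ := Nat.exists_eq_add_of_le' hk
  refine le_of_forall_gt_imp_ge_of_dense fun μ hμ => csInf_le ⟨0, fun _ h => h.1.le⟩ ⟨?_, ?_⟩
  · exact lt_trans (by positivity) hμ
  · exact sympEmb_stabEll m hx hμ
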